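/- Let P ⊂ ℝ^n be any full-dimensional lattice polytope (not necessarily simple) and φ : ℝ^n → ℂ a homogeneous polynomial function of degree d. Define G_φ(q,y) := (y+1)^d · Σ_{F face of P, including P itself} (y+1)^{dim F} (−y)^{codim F} D_{φ,F}(q) · g̃_F(−1/y). Then for every real number q and every nonzero real number y, G_φ(q,y) = (−y)^{n+d} · G_φ(−q, 1/y). -/

import Mathlib

/-!
The functional equation combines a duality of the lattice point sums `D_F` with a duality of the
polynomials `g̃_F`.

**Lattice point sums.** For a polynomial `φ` and a lattice polytope, the sum of `φ` over the lattice
points of the `q`-th dilate is a polynomial in `q`, and its value at `-q` is `(-1) ^ dim` times the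
sum of `φ (-m)` over the relative interior points `m` of the `q`-th dilate (`polytope_reciprocity`).
To see this, pass to the cone over the polytope. A generic choice of heights on its generators
induces a regular triangulation (`exists_cell`, `isCell_unique`), and a generic direction `ξ`
pointing into the cone makes its maximal cells half-open, so that they partition the cone
(`mem_coneOf_iff_cellCone`), while the direction `-ξ` yields a partition of the relative interior
(`mem_coneRelint_iff_cellCone`). For a single half-open simplicial cone the fundamental
parallelepiped reduces the claim (`halfOpen_reciprocity`) to sums over dilated standard simplices
(`simplexReciprocity_mvPolynomial`), that is, to the reciprocity of binomial coefficients. As a face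
is the disjoint union of the relative interiors of its faces, reciprocity takes the form
`D_F (-q) = ∑_{E ⊆ F} (-1) ^ (dim E + d) D_E (q)` for homogeneous `φ` of degree `d`
(`ehrhart_functional`).

**Face poset.** Applying that relation twice, for arbitrary polynomials `φ`, and choosing `φ` to be
the indicator function of one relative interior lattice point on the finitely many lattice points
involved, gives an identity between the alternating sums over intervals of faces
(`indicator_identity`); by induction the face poset is Eulerian (`eulerian`).

**The `g`-polynomials.** In an Eulerian poset the polynomials `f̃_F` are palindromic, whence the
duality `x ^ codim F * g̃_F (1 / x) = ∑_{E ⊇ F} g̃_E (x) (x - 1) ^ (dim E - dim F)` (`kls`).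

Inserting the relation for `D_F (-q)` into `G (-q, 1 / y)`, interchanging the two sums over faces
and using the duality of the `g̃_E` at `x = -y` yields `G (q, y)` up to the factor
`(-y) ^ (n + d)`.
-/

open scoped Pointwise Classical
open MeasureTheory Polynomial

noncomputable section

/-- The real vector corresponding to an integer vector in `ℤ^n ⊂ ℝ^n`. -/
def intVec {n : ℕ} (m : Fin n → ℤ) : Fin n → ℝ := fun i => (m i : ℝ)

/-- `F` is a face of the polytope `P`: either `P` itself or a nonempty set of maximizers
over `P` of a linear functional. -/
def IsFaceOf {n : ℕ} (P F : Set (Fin n → ℝ)) : Prop :=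
  F = P ∨ (F.Nonempty ∧ ∃ u : (Fin n → ℝ) →ₗ[ℝ] ℝ,
    F = {x | x ∈ P ∧ ∀ p ∈ P, u p ≤ u x})

/-- The dimension of (the affine span of) a face. -/
noncomputable def faceDim {n : ℕ} (F : Set (Fin n → ℝ)) : ℕ :=
  Module.finrank ℝ (affineSpan ℝ F).direction

/-- A polytope `P ⊂ ℝ^n` is simple if every vertex (`0`-dimensional face) lies on
exactly `n` edges (`1`-dimensional faces). -/
def IsSimple {n : ℕ} (P : Set (Fin n → ℝ)) : Prop :=
  ∀ v, IsFaceOf P v → faceDim v = 0 →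
    {E | IsFaceOf P E ∧ faceDim E = 1 ∧ v ⊆ E}.ncard = n

/-! ### Lattice point sums over dilated standard simplices -/

section SimplexSums

/-- The polynomial `binom(X + a, a)`. -/
def binPoly (a : ℕ) : ℂ[X] := C ((a.factorial : ℂ)⁻¹) * (ascPochhammer ℂ a).comp (X + 1)

lemma binPoly_eval_nat (a k : ℕ) : (binPoly a).eval (k : ℂ) = ((k + a).choose a : ℕ) := by
  have h : (ascPochhammer ℂ a).eval ((k : ℂ) + 1) = ((k + 1).ascFactorial a : ℕ) := by
    rw [← ascPochhammer_nat_eq_ascFactorial, ascPochhammer_eval_cast]; simp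
  have h0 : (a.factorial : ℂ) ≠ 0 := by exact_mod_cast a.factorial_ne_zero
  simp [binPoly, h, Nat.ascFactorial_eq_factorial_mul_choose]
  field_simp

lemma binPoly_eval_neg (a k : ℕ) :
    (binPoly a).eval (-(k : ℂ) - 1) = (-1) ^ a * (k.choose a : ℕ) := by
  have h0 : (a.factorial : ℂ) ≠ 0 := by exact_mod_cast a.factorial_ne_zero
  have h : (ascPochhammer ℂ a).eval (-(k : ℂ)) = (-1) ^ a * (k.descFactorial a : ℕ) := by
    rw [ascPochhammer_eval_neg_eq_descPochhammer, descPochhammer_eval_eq_descFactorial]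
  simp [binPoly, h, Nat.descFactorial_eq_factorial_mul_choose]
  field_simp

lemma binPoly_degree (a : ℕ) : (binPoly a).degree = a := by
  have h0 : (a.factorial : ℂ)⁻¹ ≠ 0 := inv_ne_zero (by exact_mod_cast a.factorial_ne_zero)
  have h1 : (X + 1 : ℂ[X]).natDegree = 1 := by simpa using natDegree_X_add_C (1 : ℂ)
  have hm : ((ascPochhammer ℂ a).comp (X + 1)).Monic :=
    (monic_ascPochhammer ℂ a).comp (by simpa using monic_X_add_C (1 : ℂ)) (by simp [h1])
  rw [binPoly, degree_C_mul h0, degree_eq_natDegree hm.ne_zero, natDegree_comp,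
    ascPochhammer_natDegree, h1, mul_one]

/-- The polynomials `binPoly a` form a basis of `ℂ[X]`; this packages their degrees. -/
def binSeq : Polynomial.Sequence ℂ where
  elems' := binPoly
  degree_eq' := binPoly_degree

lemma exists_binPoly_expansion (f : ℂ[X]) :
    ∃ c : ℕ →₀ ℂ, f = ∑ a ∈ c.support, c a • binPoly a := by
  have h := binSeq.span (fun i => (leadingCoeff_ne_zero.mpr (binSeq.ne_zero i)).isUnit)
  have hf : f ∈ Submodule.span ℂ (Set.range binSeq) := by rw [h]; trivial
  obtain ⟨c, hc⟩ := Finsupp.mem_span_range_iff_exists_finsupp.mp hf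
  exact ⟨c, hc.symm⟩

lemma prod_mk_choose {ι : Type*} [Fintype ι] (a : ι → ℕ) :
    ∏ i, (PowerSeries.mk fun k => (((k + a i).choose (a i) : ℕ) : ℂ)) =
      (PowerSeries.invOneSubPow ℂ (∑ i, (a i + 1))).val := by
  have : ∀ s : Finset ι, ∏ i ∈ s, (PowerSeries.mk fun k => (((k + a i).choose (a i) : ℕ) : ℂ)) =
      (PowerSeries.invOneSubPow ℂ (∑ i ∈ s, (a i + 1))).val := by
    intro s
    induction s using Finset.induction_on with
    | empty => simp [PowerSeries.invOneSubPow_zero]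
    | insert i s hi ih =>
      rw [Finset.prod_insert hi, Finset.sum_insert hi, PowerSeries.invOneSubPow_add, ih,
        Units.val_mul, PowerSeries.invOneSubPow_val_succ_eq_mk_add_choose]
      simp [add_comm]
  exact this _

lemma coeff_prod_piAntidiag {ι : Type*} [Fintype ι] (f : ι → PowerSeries ℂ) (j : ℕ) :
    PowerSeries.coeff j (∏ i, f i) =
      ∑ k ∈ Finset.piAntidiag Finset.univ j, ∏ i, PowerSeries.coeff (k i) (f i) := by
  rw [PowerSeries.coeff_prod]
  refine Finset.sum_nbij' (fun k => ⇑k) (fun k => Finsupp.equivFunOnFinite.symm k) ?_ ?_ ?_ ?_ ?_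
  · intro k hk; simpa using hk
  · intro k hk; simpa using hk
  · intro k _; ext; simp
  · intro k _; ext; simp
  · intro k _; rfl

lemma sum_prod_choose {ι : Type*} [Fintype ι] [Nonempty ι] (a : ι → ℕ) (j : ℕ) :
    ∑ k ∈ Finset.piAntidiag Finset.univ j, ∏ i, (((k i + a i).choose (a i) : ℕ) : ℂ) =
      ((j + (∑ i, (a i + 1) - 1)).choose (∑ i, (a i + 1) - 1) : ℕ) := by
  have hM : 0 < ∑ i, (a i + 1) := Finset.sum_pos (fun i _ => by omega) Finset.univ_nonempty
  have h := congrArg (PowerSeries.coeff j) (prod_mk_choose a)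
  rw [PowerSeries.invOneSubPow_val_eq_mk_sub_one_add_choose_of_pos ℂ _ hM,
    coeff_prod_piAntidiag] at h
  simp only [PowerSeries.coeff_mk] at h
  rw [add_comm j, ← h]

lemma sum_prod_choose' {ι : Type*} [Fintype ι] [Nonempty ι] (a : ι → ℕ) (j : ℕ) :
    ∑ k ∈ Finset.piAntidiag Finset.univ j, ∏ i, (((k i).choose (a i) : ℕ) : ℂ) =
      ((j + (Fintype.card ι - 1)).choose (∑ i, (a i + 1) - 1) : ℕ) := by
  have hM : 0 < ∑ i, (a i + 1) := Finset.sum_pos (fun i _ => by omega) Finset.univ_nonempty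
  have hc : ∑ i, (a i + 1) = ∑ i, a i + Fintype.card ι := by simp [Finset.sum_add_distrib]
  have hN : 0 < Fintype.card ι := Fintype.card_pos
  have h1 : ∀ a : ℕ, (PowerSeries.mk fun k => ((k.choose a : ℕ) : ℂ)) =
      PowerSeries.X ^ a * PowerSeries.mk fun k => (((k + a).choose a : ℕ) : ℂ) := by
    intro a
    ext k
    rw [PowerSeries.coeff_X_pow_mul']
    split_ifs with h
    · simp [Nat.sub_add_cancel h]
    · simp [Nat.choose_eq_zero_of_lt (not_le.mp h)]
  have h : PowerSeries.coeff j (∏ i, (PowerSeries.mk fun k => ((k.choose (a i) : ℕ) : ℂ))) = _ := rfl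
  conv_rhs at h => simp only [h1, Finset.prod_mul_distrib, prod_mk_choose,
    PowerSeries.invOneSubPow_val_eq_mk_sub_one_add_choose_of_pos ℂ _ hM, Finset.prod_pow_eq_pow_sum]
  rw [coeff_prod_piAntidiag, PowerSeries.coeff_X_pow_mul'] at h
  simp only [PowerSeries.coeff_mk] at h
  rw [h]
  split_ifs with hj
  · congr 2; omega
  · rw [Nat.choose_eq_zero_of_lt (by omega)]; simp

/-- Reciprocity for sums over the dilates of a standard simplex: the sum of `f` over the
nonnegative integer vectors with coordinate sum `j` is a polynomial `s` in `j`, and up to sign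
`s (-j)` is the sum of `f (-k)` over the positive integer vectors `k` with coordinate sum `j`. -/
def SimplexReciprocity (ι : Type*) [Fintype ι] (f : (ι → ℂ) → ℂ) : Prop :=
  ∃ s : ℂ[X],
    (∀ j : ℕ, s.eval (j : ℂ) =
      ∑ k ∈ Finset.piAntidiag Finset.univ j, f fun i => ((k i : ℕ) : ℂ)) ∧
    (∀ j : ℕ, s.eval (-((j + Fintype.card ι : ℕ) : ℂ)) = (-1) ^ (Fintype.card ι - 1) *
      ∑ k ∈ Finset.piAntidiag Finset.univ j, f fun i => -((k i : ℕ) : ℂ) - 1) ∧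
    ∀ j : ℕ, 1 ≤ j → j < Fintype.card ι → s.eval (-(j : ℂ)) = 0

lemma simplexReciprocity_sum {ι κ : Type*} [Fintype ι] (u : Finset κ) (c : κ → ℂ)
    (f : κ → (ι → ℂ) → ℂ) (h : ∀ a ∈ u, SimplexReciprocity ι (f a)) :
    SimplexReciprocity ι (fun x => ∑ a ∈ u, c a * f a x) := by
  choose! s hs using h
  refine ⟨∑ a ∈ u, C (c a) * s a, ?_, ?_, ?_⟩
  · intro j
    rw [Finset.sum_comm, eval_finsetSum]
    refine Finset.sum_congr rfl fun a ha => ?_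
    rw [eval_mul, eval_C, (hs a ha).1, Finset.mul_sum]
  · intro j
    rw [Finset.sum_comm, eval_finsetSum, Finset.mul_sum]
    refine Finset.sum_congr rfl fun a ha => ?_
    rw [eval_mul, eval_C, (hs a ha).2.1, ← Finset.mul_sum]
    ring
  · intro j h1 h2
    rw [eval_finsetSum]
    refine Finset.sum_eq_zero fun a ha => ?_
    rw [eval_mul, (hs a ha).2.2 j h1 h2, mul_zero]

lemma simplexReciprocity_binPoly {ι : Type*} [Fintype ι] [Nonempty ι] (a : ι → ℕ) :
    SimplexReciprocity ι (fun x => ∏ i, (binPoly (a i)).eval (x i)) := by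
  have hM : 0 < ∑ i, (a i + 1) := Finset.sum_pos (fun i _ => by omega) Finset.univ_nonempty
  have hc : ∑ i, (a i + 1) = ∑ i, a i + Fintype.card ι := by simp [Finset.sum_add_distrib]
  have hN : 0 < Fintype.card ι := Fintype.card_pos
  refine ⟨binPoly (∑ i, (a i + 1) - 1), ?_, ?_, ?_⟩
  · intro j
    simp only [binPoly_eval_nat]
    rw [sum_prod_choose]
  · intro j
    simp only [binPoly_eval_neg, Finset.prod_mul_distrib, Finset.prod_pow_eq_pow_sum]
    rw [← Finset.mul_sum, sum_prod_choose', ← mul_assoc, ← pow_add]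
    have : (-((j + Fintype.card ι : ℕ) : ℂ)) = -((j + (Fintype.card ι - 1) : ℕ) : ℂ) - 1 := by
      have : ((Fintype.card ι : ℕ) : ℂ) = ((Fintype.card ι - 1 : ℕ) : ℂ) + 1 := by
        exact_mod_cast (Nat.sub_add_cancel hN).symm
      push_cast [this]; ring
    rw [this, binPoly_eval_neg]
    congr 2
    omega
  · intro j h1 h2
    obtain ⟨j, rfl⟩ := Nat.exists_eq_add_of_le' h1
    have : (-((j + 1 : ℕ) : ℂ)) = -(j : ℂ) - 1 := by push_cast; ring
    rw [this, binPoly_eval_neg, Nat.choose_eq_zero_of_lt (by omega)]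
    simp

lemma simplexReciprocity_prod {ι : Type*} [Fintype ι] [Nonempty ι] (f : ι → ℂ[X]) :
    SimplexReciprocity ι (fun x => ∏ i, (f i).eval (x i)) := by
  choose c hc using fun i => exists_binPoly_expansion (f i)
  have h := simplexReciprocity_sum (Fintype.piFinset fun i => (c i).support)
    (fun a => ∏ i, c i (a i)) (fun a (x : ι → ℂ) => ∏ i, (binPoly (a i)).eval (x i))
    (fun a _ => simplexReciprocity_binPoly a)
  convert h using 2 with x
  have : ∀ i, (f i).eval (x i) = ∑ a ∈ (c i).support, c i a * (binPoly a).eval (x i) := by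
    intro i
    conv_lhs => rw [hc i]
    simp [eval_finsetSum]
  simp only [this, Finset.prod_univ_sum, Finset.prod_mul_distrib]

theorem simplexReciprocity_mvPolynomial {ι : Type*} [Fintype ι] [Nonempty ι]
    (Q : MvPolynomial ι ℂ) : SimplexReciprocity ι (fun x => MvPolynomial.eval x Q) := by
  have h := simplexReciprocity_sum Q.support (fun m => Q.coeff m)
    (fun m (x : ι → ℂ) => ∏ i, ((X : ℂ[X]) ^ m i).eval (x i))
    (fun m _ => simplexReciprocity_prod _)
  convert h using 2 with x
  simp [MvPolynomial.eval_eq']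

end SimplexSums

/-! ### Half-open simplicial cones -/

/-- The half-open simplicial cone spanned by a basis `b`: the facet opposite to `b i` is kept when
`σ i` holds and removed otherwise. -/
def halfOpenCone {ι V : Type*} [AddCommGroup V] [Module ℝ V] (b : Module.Basis ι ℝ V)
    (σ : ι → Prop) : Set V :=
  {x | ∀ i, 0 < b.repr x i ∨ (b.repr x i = 0 ∧ σ i)}

/-- The lattice points of the fundamental parallelepiped of `halfOpenCone b σ`. -/
def fundBox {ι V : Type*} [AddCommGroup V] [Module ℝ V] (Λ : AddSubgroup V)
    (b : Module.Basis ι ℝ V) (σ : ι → Prop) : Set V :=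
  {p | p ∈ Λ ∧ ∀ i, (σ i → 0 ≤ b.repr p i ∧ b.repr p i < 1) ∧
    (¬ σ i → 0 < b.repr p i ∧ b.repr p i ≤ 1)}

/-- Vectors of natural numbers with coordinate sum `z` (empty for negative `z`). -/
def natVecs (ι : Type*) [Fintype ι] (z : ℤ) : Finset (ι → ℕ) :=
  if 0 ≤ z then Finset.piAntidiag Finset.univ z.toNat else ∅

lemma mem_natVecs {ι : Type*} [Fintype ι] {z : ℤ} {k : ι → ℕ} :
    k ∈ natVecs ι z ↔ ((∑ i, k i : ℕ) : ℤ) = z := by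
  unfold natVecs
  split_ifs with h
  · simp only [Finset.mem_piAntidiag, Finset.mem_univ, implies_true, and_true]
    change ∑ i, k i = z.toNat ↔ _
    omega
  · simp only [Finset.notMem_empty, false_iff]
    omega

section HalfOpen

variable {ι V : Type*} [AddCommGroup V] [Module ℝ V] {Λ : AddSubgroup V}
  {t : V →ₗ[ℝ] ℝ} {b : Module.Basis ι ℝ V}

lemma fundBox_finite (hfin : ∀ R : ℝ, {m | m ∈ Λ ∧ ∀ i, |b.repr m i| ≤ R}.Finite)
    (σ : ι → Prop) : (fundBox Λ b σ).Finite := by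
  refine (hfin 1).subset fun p hp => ⟨hp.1, fun i => ?_⟩
  have := hp.2 i
  by_cases h : σ i
  · have := this.1 h; rw [abs_le]; constructor <;> linarith
  · have := this.2 h; rw [abs_le]; constructor <;> linarith

variable [Fintype ι]

lemma height_eq_sum_repr (hbt : ∀ i, t (b i) = 1) (x : V) : t x = ∑ i, b.repr x i := by
  conv_lhs => rw [← b.sum_repr x, map_sum]
  simp only [map_smul, hbt, smul_eq_mul, mul_one]

lemma halfOpen_slice_finite (hfin : ∀ R : ℝ, {m | m ∈ Λ ∧ ∀ i, |b.repr m i| ≤ R}.Finite)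
    (hbt : ∀ i, t (b i) = 1) (σ : ι → Prop) (q : ℝ) :
    {m | m ∈ Λ ∧ m ∈ halfOpenCone b σ ∧ t m = q}.Finite := by
  refine (hfin q).subset fun m hm => ⟨hm.1, fun i => ?_⟩
  have h0 : ∀ i, 0 ≤ b.repr m i := fun i => by
    rcases hm.2.1 i with h | h
    · exact h.le
    · exact h.1.ge
  rw [abs_of_nonneg (h0 i), ← hm.2.2, height_eq_sum_repr hbt]
  exact Finset.single_le_sum (f := fun i => b.repr m i) (fun i _ => h0 i) (Finset.mem_univ i)

/-- Every lattice point of a half-open simplicial cone is uniquely the sum of a lattice point of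
the fundamental parallelepiped and a nonnegative integer combination of the generators. -/
lemma sum_halfOpen_slice (hfin : ∀ R : ℝ, {m | m ∈ Λ ∧ ∀ i, |b.repr m i| ≤ R}.Finite)
    (hbΛ : ∀ i, b i ∈ Λ) (hbt : ∀ i, t (b i) = 1) (ht : ∀ m ∈ Λ, ∃ z : ℤ, t m = z)
    (σ : ι → Prop) (q : ℕ) (ψ : V → ℂ) :
    ∑ᶠ m ∈ {m | m ∈ Λ ∧ m ∈ halfOpenCone b σ ∧ t m = (q : ℝ)}, ψ m =
      ∑ p ∈ (fundBox_finite hfin σ).toFinset, ∑ k ∈ natVecs ι ((q : ℤ) - ⌊t p⌋),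
        ψ (p + ∑ i, (k i : ℝ) • b i) := by
  rw [Finset.sum_sigma', ← finsum_mem_coe_finset]
  symm
  have hrep : ∀ (p : V) (k : ι → ℕ) (i : ι),
      b.repr (p + ∑ j, (k j : ℝ) • b j) i = b.repr p i + k i := by
    intro p k i
    rw [map_add, Finsupp.add_apply, b.repr_sum_self]
  have hflo : ∀ p ∈ Λ, ((⌊t p⌋ : ℤ) : ℝ) = t p := by
    intro p hp
    obtain ⟨z, hz⟩ := ht p hp
    rw [hz, Int.floor_intCast]
  have hkΛ : ∀ k : ι → ℕ, ∑ i, (k i : ℝ) • b i ∈ Λ := fun k =>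
    Λ.sum_mem fun i _ => by
      rw [Nat.cast_smul_eq_nsmul]; exact Λ.nsmul_mem (hbΛ i) _
  refine finsum_mem_eq_of_bijOn (fun x : (_ : V) × (ι → ℕ) => x.1 + ∑ i, (x.2 i : ℝ) • b i)
    ⟨?_, ?_, ?_⟩ (fun x _ => rfl)
  · rintro ⟨p, k⟩ h
    simp only [Finset.coe_sigma, Set.mem_sigma_iff, Finset.mem_coe, Set.Finite.mem_toFinset,
      mem_natVecs] at h
    obtain ⟨hp, hk⟩ := h
    refine ⟨Λ.add_mem hp.1 (hkΛ k), fun i => ?_, ?_⟩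
    · rw [hrep]
      have h0 : (0 : ℝ) ≤ k i := Nat.cast_nonneg _
      by_cases hσ : σ i
      · have := (hp.2 i).1 hσ
        rcases (add_nonneg this.1 h0).eq_or_lt with h | h
        · exact Or.inr ⟨h.symm, hσ⟩
        · exact Or.inl h
      · have := (hp.2 i).2 hσ
        exact Or.inl (by linarith)
    · have hk' : ((∑ i, (k i : ℝ)) : ℝ) = q - t p := by
        rw [← hflo p hp.1]; exact_mod_cast hk
      simp [map_add, hbt, hk']
  · rintro ⟨p, k⟩ h ⟨p', k'⟩ h' heq
    simp only [Finset.coe_sigma, Set.mem_sigma_iff, Finset.mem_coe, Set.Finite.mem_toFinset,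
      mem_natVecs] at h h'
    have hk : k = k' := by
      funext i
      have hi := congrArg (fun x => b.repr x i) heq
      simp only [hrep] at hi
      have h1 := h.1.2 i
      have h2 := h'.1.2 i
      have h3 : (k i : ℝ) < k' i + 1 ∧ (k' i : ℝ) < k i + 1 := by
        by_cases hσ : σ i
        · have h1 := h1.1 hσ; have h2 := h2.1 hσ; constructor <;> linarith
        · have h1 := h1.2 hσ; have h2 := h2.2 hσ; constructor <;> linarith
      have h4 : k i < k' i + 1 ∧ k' i < k i + 1 := by exact_mod_cast h3
      omega
    subst hk
    have : p = p' := by simpa using heq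
    rw [this]
  · rintro m ⟨hm, hmC, hmt⟩
    set k : ι → ℕ := fun i => if σ i then ⌊b.repr m i⌋₊ else ⌈b.repr m i⌉₊ - 1 with hk
    set p := m - ∑ i, (k i : ℝ) • b i with hp
    have hpm : p + ∑ i, (k i : ℝ) • b i = m := by simp [hp]
    have hpΛ : p ∈ Λ := Λ.sub_mem hm (hkΛ k)
    have hpr : ∀ i, b.repr p i = b.repr m i - k i := fun i => by
      have := hrep p k i
      rw [hpm] at this; linarith
    refine ⟨⟨p, k⟩, ?_, hpm⟩
    simp only [Finset.coe_sigma, Set.mem_sigma_iff, Finset.mem_coe, Set.Finite.mem_toFinset,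
      mem_natVecs]
    refine ⟨⟨hpΛ, fun i => ⟨fun hσ => ?_, fun hσ => ?_⟩⟩, ?_⟩
    · have hki : k i = ⌊b.repr m i⌋₊ := by simp [hk, hσ]
      have h0 : 0 ≤ b.repr m i := by
        rcases hmC i with h | h
        · exact h.le
        · exact h.1.ge
      rw [hpr, hki]
      have := Nat.floor_le h0
      have := Nat.lt_floor_add_one (b.repr m i)
      constructor <;> linarith
    · have hki : k i = ⌈b.repr m i⌉₊ - 1 := by simp [hk, hσ]
      have h0 : 0 < b.repr m i := by
        rcases hmC i with h | h
        · exact h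
        · exact absurd h.2 hσ
      have h1 : 0 < ⌈b.repr m i⌉₊ := Nat.ceil_pos.mpr h0
      have h2 : ((k i : ℕ) : ℝ) = ⌈b.repr m i⌉₊ - 1 := by
        rw [hki, Nat.cast_sub h1, Nat.cast_one]
      rw [hpr, h2]
      have := Nat.le_ceil (b.repr m i)
      have := Nat.ceil_lt_add_one h0.le
      constructor <;> linarith
    · have h1 : t m = t p + ∑ i, (k i : ℝ) := by
        conv_lhs => rw [← hpm]
        simp [map_add, hbt]
      have h2 : ((∑ i, (k i : ℝ)) : ℝ) = q - (⌊t p⌋ : ℤ) := by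
        rw [hflo p hpΛ, ← hmt]; linarith
      exact_mod_cast h2

/-- Reciprocity for half-open simplicial cones: passing from `q` to `-q` interchanges the kept and
the removed facets. -/
theorem halfOpen_reciprocity [Nonempty ι]
    (hfin : ∀ R : ℝ, {m | m ∈ Λ ∧ ∀ i, |b.repr m i| ≤ R}.Finite)
    (hbΛ : ∀ i, b i ∈ Λ) (hbt : ∀ i, t (b i) = 1) (ht : ∀ m ∈ Λ, ∃ z : ℤ, t m = z)
    (φ : V → ℂ) (hφ : ∀ p, ∃ Q : MvPolynomial ι ℂ, ∀ k : ι → ℝ,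
      φ (p + ∑ i, k i • b i) = MvPolynomial.eval (fun i => (k i : ℂ)) Q)
    (σ : ι → Prop) :
    ∃ D : ℂ[X], ∀ q : ℕ, 0 < q →
      D.eval (q : ℂ) = ∑ᶠ m ∈ {m | m ∈ Λ ∧ m ∈ halfOpenCone b σ ∧ t m = (q : ℝ)}, φ m ∧
      D.eval (-(q : ℂ)) = (-1) ^ (Fintype.card ι - 1) *
        ∑ᶠ m ∈ {m | m ∈ Λ ∧ m ∈ halfOpenCone b (fun i => ¬ σ i) ∧ t m = (q : ℝ)}, φ (-m) := by
  choose Q hQ using hφ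
  choose s hs using fun p => simplexReciprocity_mvPolynomial (Q p)
  have hflo : ∀ p ∈ Λ, ((⌊t p⌋ : ℤ) : ℝ) = t p := by
    intro p hp
    obtain ⟨z, hz⟩ := ht p hp
    rw [hz, Int.floor_intCast]
  have hN : 0 < Fintype.card ι := Fintype.card_pos
  have hbound : ∀ p ∈ fundBox Λ b σ, 0 ≤ ⌊t p⌋ ∧ ⌊t p⌋ ≤ Fintype.card ι := by
    intro p hp
    have h01 : ∀ i, 0 ≤ b.repr p i ∧ b.repr p i ≤ 1 := fun i => by
      by_cases h : σ i
      · exact ⟨((hp.2 i).1 h).1, ((hp.2 i).1 h).2.le⟩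
      · exact ⟨((hp.2 i).2 h).1.le, ((hp.2 i).2 h).2⟩
    have h1 : 0 ≤ t p := by
      rw [height_eq_sum_repr hbt]; exact Finset.sum_nonneg fun i _ => (h01 i).1
    have h2 : t p ≤ Fintype.card ι := by
      rw [height_eq_sum_repr hbt]
      refine (Finset.sum_le_sum fun i _ => (h01 i).2).trans ?_
      simp
    rw [← hflo p hp.1] at h1 h2
    exact ⟨by exact_mod_cast h1, by exact_mod_cast h2⟩
  refine ⟨∑ p ∈ (fundBox_finite hfin σ).toFinset, (s p).comp (X - C ((⌊t p⌋ : ℤ) : ℂ)),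
    fun q hq => ⟨?_, ?_⟩⟩
  · rw [sum_halfOpen_slice hfin hbΛ hbt ht, eval_finsetSum]
    refine Finset.sum_congr rfl fun p hp => ?_
    have hp' := hbound p ((Set.Finite.mem_toFinset _).mp hp)
    rw [eval_comp, eval_sub, eval_X, eval_C]
    have hcast : ((q : ℂ) - ((⌊t p⌋ : ℤ) : ℂ)) = (((q : ℤ) - ⌊t p⌋ : ℤ) : ℂ) := by push_cast; ring
    rw [hcast]
    unfold natVecs
    split_ifs with h
    · obtain ⟨j, hj⟩ := Int.eq_ofNat_of_zero_le h
      rw [hj, Int.toNat_natCast, Int.cast_natCast, (hs p).1]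
      refine Finset.sum_congr rfl fun k _ => ?_
      rw [hQ]; simp
    · obtain ⟨j, hj⟩ := Int.eq_ofNat_of_zero_le (a := -((q : ℤ) - ⌊t p⌋)) (by omega)
      have hj' : ((q : ℤ) - ⌊t p⌋) = -(j : ℤ) := by omega
      rw [hj', Int.cast_neg, Int.cast_natCast, (hs p).2.2 j (by omega) (by omega)]
      simp
  · rw [sum_halfOpen_slice hfin hbΛ hbt ht _ q (fun m => φ (-m)), eval_finsetSum, Finset.mul_sum]
    have hinv : ∀ (τ : ι → Prop), ∀ p ∈ fundBox Λ b τ,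
        ∑ i, b i - p ∈ fundBox Λ b (fun i => ¬ τ i) := by
      intro τ p hp
      have hr : ∀ i, b.repr (∑ i, b i - p) i = 1 - b.repr p i := by
        intro i
        have : b.repr (∑ j, (1 : ℝ) • b j) i = 1 := by
          rw [b.repr_sum_self (fun _ => (1 : ℝ))]
        simp only [one_smul] at this
        rw [map_sub, Finsupp.sub_apply, this]
      refine ⟨Λ.sub_mem (Λ.sum_mem fun i _ => hbΛ i) hp.1, fun i => ?_⟩
      rw [hr]
      have := hp.2 i
      constructor
      · intro h; have := this.2 h; constructor <;> linarith
      · intro h; have := this.1 (not_not.mp h); constructor <;> linarith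
    refine Finset.sum_nbij' (fun p => ∑ i, b i - p) (fun p => ∑ i, b i - p) ?_ ?_ ?_ ?_ ?_
    · intro p hp
      simp only [Set.Finite.mem_toFinset] at hp ⊢
      exact hinv _ p hp
    · intro p hp
      simp only [Set.Finite.mem_toFinset] at hp ⊢
      have := hinv _ p hp
      simpa only [not_not] using this
    · intro p _; simp
    · intro p _; simp
    · intro p hp
      simp only [Set.Finite.mem_toFinset] at hp
      have hp' := hbound p hp
      rw [eval_comp, eval_sub, eval_X, eval_C]
      have hfl : ⌊t (∑ i, b i - p)⌋ = Fintype.card ι - ⌊t p⌋ := by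
        have : t (∑ i, b i - p) = ((Fintype.card ι - ⌊t p⌋ : ℤ) : ℝ) := by
          push_cast; rw [hflo p hp.1]; simp [hbt]
        rw [this, Int.floor_intCast]
      rw [hfl]
      obtain ⟨c, hc⟩ := Int.eq_ofNat_of_zero_le hp'.1
      have hcast : (-(q : ℂ) - ((⌊t p⌋ : ℤ) : ℂ)) = -((q + c : ℕ) : ℂ) := by
        rw [hc]; push_cast; ring
      rw [hcast, hc]
      unfold natVecs
      split_ifs with h
      · obtain ⟨j, hj⟩ := Int.eq_ofNat_of_zero_le h
        have hqc : q + c = j + Fintype.card ι := by omega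
        rw [hj, Int.toNat_natCast, hqc, (hs p).2.1]
        congr 1
        refine Finset.sum_congr rfl fun k _ => ?_
        have : -(∑ i, b i - p + ∑ i, (k i : ℝ) • b i) = p + ∑ i, (-(k i : ℝ) - 1) • b i := by
          simp only [sub_smul, neg_smul, one_smul, Finset.sum_sub_distrib, Finset.sum_neg_distrib]
          abel
        rw [this, hQ]; simp
      · rw [(hs p).2.2 (q + c) (by omega) (by omega)]
        simp

end HalfOpen

/-! ### Regular triangulations of cones -/

section RegularTriangulation

/-- The convex cone generated by the family `w`. -/
def coneOf {ι V : Type*} [Fintype ι] [AddCommGroup V] [Module ℝ V] (w : ι → V) : Set V :=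
  {x | ∃ c : ι → ℝ, (∀ i, 0 ≤ c i) ∧ ∑ i, c i • w i = x}

/-- The relative interior of `coneOf w`, described algebraically: one can move from `x` a little
away from every point of the cone without leaving the cone. -/
def coneRelint {ι V : Type*} [Fintype ι] [AddCommGroup V] [Module ℝ V] (w : ι → V) : Set V :=
  {x | x ∈ coneOf w ∧ ∀ y ∈ coneOf w, ∃ ε : ℝ, 0 < ε ∧ x - ε • y ∈ coneOf w}

/-- A height function on the generators is generic if every linearly dependent subfamily has a
linear relation that the heights do not satisfy. -/
def GenericHeight {ι V : Type*} [Fintype ι] [AddCommGroup V] [Module ℝ V] (w : ι → V)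
    (h : ι → ℝ) : Prop :=
  ∀ T : Finset ι, ¬ LinearIndependent ℝ (fun i : T => w i) →
    ∃ μ : ι → ℝ, (∀ i ∉ T, μ i = 0) ∧ ∑ i, μ i • w i = 0 ∧ ∑ i, h i * μ i ≠ 0

/-- A vector is in general position with respect to `w` if it avoids every proper subspace spanned
by some of the `w i`. -/
def GenericVec {ι V : Type*} [AddCommGroup V] [Module ℝ V] (w : ι → V) (x : V) : Prop :=
  ∀ A : Finset ι, Submodule.span ℝ (w '' (A : Set ι)) ≠ ⊤ →
    x ∉ Submodule.span ℝ (w '' (A : Set ι))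

/-- `B` indexes a maximal cell of the regular triangulation of `coneOf w` induced by the heights
`h`: the vectors `w i`, `i ∈ B`, are a basis, and the linear functional with the prescribed heights
on this basis lies below the heights of all generators. -/
def IsCell {ι V : Type*} [AddCommGroup V] [Module ℝ V] (w : ι → V) (h : ι → ℝ)
    (B : Finset ι) : Prop :=
  LinearIndependent ℝ (fun i : B => w i) ∧ Submodule.span ℝ (w '' (B : Set ι)) = ⊤ ∧
    ∃ ℓ : V →ₗ[ℝ] ℝ, (∀ i ∈ B, ℓ (w i) = h i) ∧ ∀ i, ℓ (w i) ≤ h i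

/-- The generators in a cell, as a basis. -/
def IsCell.basis {ι V : Type*} [AddCommGroup V] [Module ℝ V] {w : ι → V} {h : ι → ℝ}
    {B : Finset ι} (hB : IsCell w h B) : Module.Basis B ℝ V :=
  Module.Basis.mk hB.1 (by
    have : Set.range (fun i : B => w i) = w '' (B : Set ι) := by
      ext x; simp
    rw [this, hB.2.1])

lemma IsCell.basis_apply {ι V : Type*} [AddCommGroup V] [Module ℝ V] {w : ι → V} {h : ι → ℝ}
    {B : Finset ι} (hB : IsCell w h B) (i : B) : hB.basis i = w i := by
  simp [IsCell.basis]

open Filter Topology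

section Cone

variable {ι V : Type*} [Fintype ι] [AddCommGroup V] [Module ℝ V] {w : ι → V} {h : ι → ℝ}

lemma sum_extend (B : Finset ι) (f : B → ℝ) (w : ι → V) :
    ∑ j, (if hj : j ∈ B then f ⟨j, hj⟩ else 0) • w j = ∑ j : B, f j • w j := by
  rw [← Finset.sum_subset (Finset.subset_univ B), ← Finset.sum_coe_sort]
  · exact Finset.sum_congr rfl fun j _ => by simp
  · intro j _ hj; simp [hj]

lemma exists_genericHeight (w : ι → V) : ∃ h, GenericHeight w h := by
  have key : ∀ T : Finset ι, ∃ μ : ι → ℝ, ¬ LinearIndependent ℝ (fun i : T => w i) →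
      μ ≠ 0 ∧ (∀ i ∉ T, μ i = 0) ∧ ∑ i, μ i • w i = 0 := by
    intro T
    by_cases hT : LinearIndependent ℝ (fun i : T => w i)
    · exact ⟨0, fun h => absurd hT h⟩
    · obtain ⟨g, hg, i, hi⟩ := Fintype.not_linearIndependent_iff.mp hT
      refine ⟨fun j => if hj : j ∈ T then g ⟨j, hj⟩ else 0, fun _ => ⟨?_, ?_, ?_⟩⟩
      · intro h0
        have := congrFun h0 i
        simp at this
        exact hi this
      · intro i hi; simp [hi]
      · rw [sum_extend, hg]
  choose μ hμ using key
  let L : (ι → ℝ) → ((ι → ℝ) →ₗ[ℝ] ℝ) := fun μ => ∑ i, μ i • LinearMap.proj i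
  have hL : ∀ μ h, L μ h = ∑ i, h i * μ i := by
    intro μ h
    simp only [L, LinearMap.sum_apply, LinearMap.smul_apply, LinearMap.proj_apply, smul_eq_mul]
    exact Finset.sum_congr rfl fun i _ => mul_comm _ _
  let s : Finset (Submodule ℝ (ι → ℝ)) :=
    ((Finset.univ : Finset (Finset ι)).filter fun T : Finset ι =>
      ¬ LinearIndependent ℝ (fun i : T => w i)).image
        fun T => LinearMap.ker (L (μ T))
  have hs : ⊤ ∉ s := by
    intro htop
    obtain ⟨T, hT, hTtop⟩ := Finset.mem_image.mp htop
    have hT := (Finset.mem_filter.mp hT).2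
    have h1 : μ T ∈ LinearMap.ker (L (μ T)) := by rw [hTtop]; trivial
    rw [LinearMap.mem_ker, hL] at h1
    refine (hμ T hT).1 (funext fun i => ?_)
    have := (Finset.sum_eq_zero_iff_of_nonneg (fun i _ => mul_self_nonneg _)).mp h1 i
      (Finset.mem_univ i)
    simpa using this
  obtain ⟨h, hh⟩ := (Set.ne_univ_iff_exists_notMem _).mp
    (Subspace.biUnion_ne_univ_of_top_notMem hs)
  refine ⟨h, fun T hT => ⟨μ T, (hμ T hT).2.1, (hμ T hT).2.2, fun h0 => hh ?_⟩⟩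
  simp only [Set.mem_iUnion]
  refine ⟨LinearMap.ker (L (μ T)), Finset.mem_image.mpr ⟨T, by simp [hT], rfl⟩, ?_⟩
  rw [SetLike.mem_coe, LinearMap.mem_ker, hL, h0]

/-- The simplex through a point in the interior of a cell is determined by that point. -/
lemma isCell_unique (hh : GenericHeight w h) {B B' : Finset ι} (hB : IsCell w h B)
    (hB' : IsCell w h B') {c c' : ι → ℝ} (hc : ∀ i ∈ B, 0 < c i) (hc0 : ∀ i ∉ B, c i = 0)
    (hc' : ∀ i ∈ B', 0 < c' i) (hc0' : ∀ i ∉ B', c' i = 0)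
    (heq : ∑ i, c i • w i = ∑ i, c' i • w i) : B = B' := by
  obtain ⟨-, -, ℓ, hℓ, hℓ'⟩ := hB
  obtain ⟨-, -, m, hm, hm'⟩ := hB'
  have nn : ∀ i, 0 ≤ c i := fun i => by
    by_cases hi : i ∈ B
    · exact (hc i hi).le
    · exact (hc0 i hi).ge
  have nn' : ∀ i, 0 ≤ c' i := fun i => by
    by_cases hi : i ∈ B'
    · exact (hc' i hi).le
    · exact (hc0' i hi).ge
  have e1 : ∑ i, c i * ℓ (w i) = ∑ i, c i * h i := Finset.sum_congr rfl fun i _ => by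
    by_cases hi : i ∈ B
    · rw [hℓ i hi]
    · simp [hc0 i hi]
  have e2 : ∑ i, c' i * m (w i) = ∑ i, c' i * h i := Finset.sum_congr rfl fun i _ => by
    by_cases hi : i ∈ B'
    · rw [hm i hi]
    · simp [hc0' i hi]
  have e3 : ∑ i, c i * ℓ (w i) = ∑ i, c' i * ℓ (w i) := by simpa using congrArg ℓ heq
  have e4 : ∑ i, c i * m (w i) = ∑ i, c' i * m (w i) := by simpa using congrArg m heq
  have e5 : ∑ i, c i * m (w i) ≤ ∑ i, c i * h i :=
    Finset.sum_le_sum fun i _ => mul_le_mul_of_nonneg_left (hm' i) (nn i)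
  have e6 : ∑ i, c' i * (h i - ℓ (w i)) = 0 := by
    refine le_antisymm ?_ (Finset.sum_nonneg fun i _ =>
      mul_nonneg (nn' i) (sub_nonneg.mpr (hℓ' i)))
    simp only [mul_sub, Finset.sum_sub_distrib]
    linarith
  have e7 : ∀ i ∈ B', ℓ (w i) = h i := fun i hi => by
    have := (Finset.sum_eq_zero_iff_of_nonneg fun i _ =>
      mul_nonneg (nn' i) (sub_nonneg.mpr (hℓ' i))).mp e6 i (Finset.mem_univ i)
    rcases mul_eq_zero.mp this with h0 | h0
    · exact absurd h0 (hc' i hi).ne'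
    · linarith
  have hT : LinearIndependent ℝ (fun i : ↥(B ∪ B') => w i) := by
    by_contra hT
    obtain ⟨μ, hμ, hμ0, hμh⟩ := hh _ hT
    apply hμh
    have : ∑ i, h i * μ i = ℓ (∑ i, μ i • w i) := by
      rw [map_sum]
      refine Finset.sum_congr rfl fun i _ => ?_
      rw [map_smul, smul_eq_mul, mul_comm]
      by_cases hi : i ∈ B ∪ B'
      · rcases Finset.mem_union.mp hi with hi | hi
        · rw [hℓ i hi]
        · rw [e7 i hi]
      · simp [hμ i hi]
    rw [this, hμ0, map_zero]
  have hcc : ∀ i, c i = c' i := by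
    intro i
    by_cases hi : i ∈ B ∪ B'
    · have h0 : ∑ j : ↥(B ∪ B'), (c j - c' j) • w j = 0 := by
        rw [← sum_extend (B ∪ B') (fun j => c j - c' j) w]
        rw [← sub_eq_zero, ← Finset.sum_sub_distrib] at heq
        rw [← heq]
        refine Finset.sum_congr rfl fun j _ => ?_
        by_cases hj : j ∈ B ∪ B'
        · simp [hj, sub_smul]
        · simp only [Finset.mem_union, not_or] at hj
          simp [hj, hc0 j hj.1, hc0' j hj.2]
      have := Fintype.linearIndependent_iff.mp hT _ h0 ⟨i, hi⟩
      simpa [sub_eq_zero] using this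
    · simp only [Finset.mem_union, not_or] at hi
      rw [hc0 i hi.1, hc0' i hi.2]
  ext i
  constructor
  · intro hi
    by_contra hi'
    exact (hc i hi).ne' (by rw [hcc, hc0' i hi'])
  · intro hi
    by_contra hi'
    exact (hc' i hi).ne' (by rw [← hcc, hc0 i hi'])

lemma eventually_pos_combo {a e : ℝ} (hae : 0 < a ∨ (a = 0 ∧ 0 < e)) :
    ∀ᶠ ε : ℝ in 𝓝[>] 0, 0 < a + ε * e := by
  rcases hae with ha | ⟨rfl, he⟩
  · have : Tendsto (fun ε : ℝ => a + ε * e) (𝓝 0) (𝓝 (a + 0 * e)) := by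
      apply Continuous.tendsto; fun_prop
    rw [zero_mul, add_zero] at this
    exact (this.eventually (lt_mem_nhds ha)).filter_mono nhdsWithin_le_nhds
  · filter_upwards [self_mem_nhdsWithin] with ε hε
    have : 0 < ε := hε
    positivity

lemma pos_combo_of_frequently {a e : ℝ} (hae : ∃ᶠ ε : ℝ in 𝓝[>] 0, 0 < a + ε * e) :
    0 < a ∨ (a = 0 ∧ 0 < e) := by
  by_contra hcon
  push Not at hcon
  apply hae
  rcases hcon.1.lt_or_eq with ha | ha
  · have h1 := eventually_pos_combo (a := -a) (e := -e) (Or.inl (by linarith))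
    filter_upwards [h1] with ε hε
    linarith
  · have he := hcon.2 ha
    filter_upwards [self_mem_nhdsWithin] with ε hε
    have : 0 < ε := hε
    have := mul_nonpos_of_nonneg_of_nonpos this.le he
    linarith

lemma eventually_notMem (U : Submodule ℝ V) (x : V) {η : V} (hη : η ∉ U) :
    ∀ᶠ ε : ℝ in 𝓝[>] 0, x + ε • η ∉ U := by
  by_cases hex : ∃ s : ℝ, x + s • η ∈ U
  · obtain ⟨s, hs⟩ := hex
    have hne : ∀ᶠ ε : ℝ in 𝓝[>] 0, ε ≠ s := by
      by_cases h0 : s = 0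
      · filter_upwards [self_mem_nhdsWithin] with ε hε
        rw [h0]; exact ne_of_gt hε
      · exact (isOpen_ne.mem_nhds (Ne.symm h0) : {y : ℝ | y ≠ s} ∈ 𝓝 0) |>
          fun h => mem_nhdsWithin_of_mem_nhds h
    filter_upwards [hne] with ε hε hmem
    have h1 : (ε - s) • η ∈ U := by
      have := U.sub_mem hmem hs
      rwa [add_sub_add_left_eq_sub, ← sub_smul] at this
    exact hη ((U.smul_mem_iff (sub_ne_zero.mpr hε)).mp h1)
  · push Not at hex
    exact Filter.Eventually.of_forall hex

/-- A point of the cone in general position lies in the interior of some cell: the optimal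
solutions of the linear program `min ∑ h i * c i` over all representations `x = ∑ c i • w i` with
`c ≥ 0` are supported on a cell. -/
lemma exists_cell {t : V →ₗ[ℝ] ℝ} (hwt : ∀ i, t (w i) = 1) (hh : GenericHeight w h) {x : V}
    (hx : x ∈ coneOf w) (hgen : GenericVec w x) :
    ∃ B, IsCell w h B ∧ ∃ c : ι → ℝ, (∀ i ∈ B, 0 < c i) ∧ (∀ i ∉ B, c i = 0) ∧
      ∑ i, c i • w i = x := by
  obtain ⟨c₀, hc₀, hc₀x⟩ := hx
  let L : (ι → ℝ) →ₗ[ℝ] V := Fintype.linearCombination ℝ w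
  have hL : ∀ c, L c = ∑ i, c i • w i := fun c => rfl
  let K : Set (ι → ℝ) := Set.Icc 0 (fun _ => t x) ∩ {c | c - c₀ ∈ LinearMap.ker L}
  have hKmem : ∀ c : ι → ℝ, (∀ i, 0 ≤ c i) → ∑ i, c i • w i = x → c ∈ K := by
    intro c hc hcx
    refine ⟨⟨hc, fun i => ?_⟩, ?_⟩
    · have : t x = ∑ i, c i := by rw [← hcx]; simp [hwt]
      rw [this]
      exact Finset.single_le_sum (f := c) (fun i _ => hc i) (Finset.mem_univ i)
    · rw [Set.mem_ofPred_eq, LinearMap.mem_ker, map_sub, hL, hL, hcx, hc₀x, sub_self]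
  have hKcomp : IsCompact K := by
    refine isCompact_Icc.inter_right ?_
    exact (Submodule.closed_of_finiteDimensional (LinearMap.ker L)).preimage
      (continuous_id.sub continuous_const)
  obtain ⟨c, hcK, hcmin⟩ := hKcomp.exists_isMinOn ⟨c₀, hKmem c₀ hc₀ hc₀x⟩
    (f := fun c => ∑ i, h i * c i) (Continuous.continuousOn (by fun_prop))
  have hc : ∀ i, 0 ≤ c i := hcK.1.1
  have hcx : ∑ i, c i • w i = x := by
    have := hcK.2
    rw [Set.mem_ofPred_eq, LinearMap.mem_ker, map_sub, hL, hL, hc₀x, sub_eq_zero] at this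
    exact this
  set B : Finset ι := Finset.univ.filter fun i => 0 < c i with hBdef
  have hB1 : ∀ i ∈ B, 0 < c i := fun i hi => (Finset.mem_filter.mp hi).2
  have hB0 : ∀ i ∉ B, c i = 0 := fun i hi => by
    have : ¬ 0 < c i := fun h => hi (by simp [hBdef, h])
    exact le_antisymm (not_lt.mp this) (hc i)
  -- moving along a relation that keeps `c` nonnegative cannot decrease the cost
  have hpert : ∀ μ : ι → ℝ, ∑ i, μ i • w i = 0 → (∀ i ∉ B, 0 ≤ μ i) → 0 ≤ ∑ i, h i * μ i := by
    intro μ hμ hμB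
    have hev : ∀ᶠ ε : ℝ in 𝓝[>] 0, ∀ i, 0 ≤ c i + ε * μ i := by
      rw [Filter.eventually_all]
      intro i
      by_cases hi : i ∈ B
      · exact (eventually_pos_combo (Or.inl (hB1 i hi))).mono fun _ h => h.le
      · filter_upwards [self_mem_nhdsWithin] with ε hε
        have h1 : 0 < ε := hε
        have := mul_nonneg h1.le (hμB i hi)
        have := hc i
        linarith
    obtain ⟨ε, hε, hε0⟩ := (hev.and self_mem_nhdsWithin).exists
    have hε0 : 0 < ε := hε0
    have hmem : (fun i => c i + ε * μ i) ∈ K := by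
      refine hKmem _ hε ?_
      simp only [add_smul, mul_smul, Finset.sum_add_distrib, ← Finset.smul_sum, hμ, hcx]
      simp
    have := hcmin hmem
    simp only [Set.mem_ofPred_eq, mul_add, Finset.sum_add_distrib] at this
    have h2 : ∑ i, h i * (ε * μ i) = ε * ∑ i, h i * μ i := by
      rw [Finset.mul_sum]; exact Finset.sum_congr rfl fun i _ => by ring
    rw [h2] at this
    by_contra hneg
    have := mul_neg_of_pos_of_neg hε0 (not_le.mp hneg)
    linarith
  have hind : LinearIndependent ℝ (fun i : B => w i) := by
    by_contra hdep
    obtain ⟨μ, hμB, hμ0, hμh⟩ := hh B hdep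
    have h1 := hpert μ hμ0 fun i hi => (hμB i hi).ge
    have h2 := hpert (-μ) (by simp [hμ0]) fun i hi => by simp [hμB i hi]
    simp only [Pi.neg_apply, mul_neg, Finset.sum_neg_distrib] at h2
    exact hμh (by linarith)
  have hspan : Submodule.span ℝ (w '' (B : Set ι)) = ⊤ := by
    by_contra hne
    refine hgen B hne ?_
    rw [← hcx]
    refine Submodule.sum_mem _ fun i _ => ?_
    by_cases hi : i ∈ B
    · exact Submodule.smul_mem _ _ (Submodule.subset_span ⟨i, hi, rfl⟩)
    · simp [hB0 i hi]
  refine ⟨B, ⟨hind, hspan, ?_⟩, c, hB1, hB0, hcx⟩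
  have hrange : Set.range (fun i : B => w i) = w '' (B : Set ι) := by ext x; simp
  let b : Module.Basis B ℝ V := Module.Basis.mk hind (by rw [hrange, hspan])
  have hb : ∀ i, b i = w i := fun i => by simp [b]
  refine ⟨b.constr ℝ fun i => h i, fun i hi => ?_, fun i => ?_⟩
  · have := b.constr_basis ℝ (fun i : B => h i) ⟨i, hi⟩
    rwa [hb] at this
  · let a : ι → ℝ := fun j => if hj : j ∈ B then b.repr (w i) ⟨j, hj⟩ else 0
    have ha : ∑ j, a j • w j = w i := by
      rw [sum_extend B (fun j => b.repr (w i) j) w]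
      conv_rhs => rw [← b.sum_repr (w i)]
      simp only [hb]
    have hcost : b.constr ℝ (fun i : B => h i) (w i) = ∑ j, a j * h j := by
      rw [b.constr_apply_fintype ℝ]
      have := sum_extend B (fun j => b.repr (w i) j) h
      simp only [smul_eq_mul] at this
      rw [this]
      simp
    rw [hcost]
    have := hpert (Pi.single i 1 - a) ?_ ?_
    · simp only [Pi.sub_apply, mul_sub, Finset.sum_sub_distrib, Pi.single_apply] at this
      simp only [mul_ite, mul_one, mul_zero, Finset.sum_ite_eq', Finset.mem_univ, if_true] at this
      simp only [mul_comm (h _)] at this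
      linarith
    · simp only [Pi.sub_apply, sub_smul, Finset.sum_sub_distrib, ha, Pi.single_apply]
      simp
    · intro j hj
      simp only [Pi.sub_apply, a, hj, dif_neg, not_false_eq_true, sub_zero, Pi.single_apply]
      split_ifs <;> simp

end Cone

end RegularTriangulation

/-! ### Half-open decomposition and reciprocity of cones -/

section ConeDecomposition

open Filter Topology

section Decomposition

variable {ι V : Type*} [Fintype ι] [AddCommGroup V] [Module ℝ V] {w : ι → V} {h : ι → ℝ}

lemma coneOf_add {x y : V} (hx : x ∈ coneOf w) (hy : y ∈ coneOf w) : x + y ∈ coneOf w := by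
  obtain ⟨c, hc, rfl⟩ := hx
  obtain ⟨d, hd, rfl⟩ := hy
  exact ⟨c + d, fun i => add_nonneg (hc i) (hd i), by simp [add_smul, Finset.sum_add_distrib]⟩

lemma coneOf_smul {x : V} {r : ℝ} (hr : 0 ≤ r) (hx : x ∈ coneOf w) : r • x ∈ coneOf w := by
  obtain ⟨c, hc, rfl⟩ := hx
  exact ⟨r • c, fun i => mul_nonneg hr (hc i), by simp [mul_smul, Finset.smul_sum]⟩

/-- Adding an all-positive combination of the generators leads into the relative interior. -/
lemma add_mem_coneRelint {x : V} {c : ι → ℝ} (hc : ∀ i, 0 < c i) (hx : x ∈ coneOf w) :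
    x + ∑ i, c i • w i ∈ coneRelint w := by
  refine ⟨coneOf_add hx ⟨c, fun i => (hc i).le, rfl⟩, fun y hy => ?_⟩
  obtain ⟨d, hd, rfl⟩ := hy
  have hev : ∀ᶠ ε : ℝ in 𝓝[>] 0, ∀ i, 0 < c i + ε * (-d i) := by
    rw [Filter.eventually_all]
    exact fun i => eventually_pos_combo (Or.inl (hc i))
  obtain ⟨ε, hε, hε0⟩ := (hev.and self_mem_nhdsWithin).exists
  refine ⟨ε, hε0, ?_⟩
  rw [add_sub_assoc]
  refine coneOf_add hx ⟨fun i => c i + ε * (-d i), fun i => (hε i).le, ?_⟩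
  simp [add_smul, mul_smul, Finset.sum_add_distrib, Finset.smul_sum, sub_eq_add_neg]

lemma exists_generic_interior (hspan : Submodule.span ℝ (Set.range w) = ⊤) :
    ∃ c : ι → ℝ, (∀ i, 0 < c i) ∧ GenericVec w (∑ i, c i • w i) := by
  let s : Finset (Submodule ℝ V) := ((Finset.univ : Finset (Finset ι)).image
    fun A : Finset ι => Submodule.span ℝ (w '' (A : Set ι))).filter fun U => U ≠ ⊤
  have hs : ⊤ ∉ s := by simp [s]
  obtain ⟨η, hη⟩ := (Set.ne_univ_iff_exists_notMem _).mp
    (Subspace.biUnion_ne_univ_of_top_notMem hs)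
  have hηgen : GenericVec w η := by
    intro A hA hmem
    apply hη
    simp only [Set.mem_iUnion]
    exact ⟨_, Finset.mem_filter.mpr ⟨Finset.mem_image.mpr ⟨A, Finset.mem_univ _, rfl⟩, hA⟩, hmem⟩
  have hηspan : η ∈ Submodule.span ℝ (Set.range w) := by rw [hspan]; trivial
  obtain ⟨μ, hμ⟩ := (Submodule.mem_span_range_iff_exists_fun ℝ).mp hηspan
  have hev1 : ∀ᶠ ε : ℝ in 𝓝[>] 0, ∀ i, 0 < 1 + ε * μ i := by
    rw [Filter.eventually_all]
    exact fun i => eventually_pos_combo (Or.inl one_pos)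
  have hev2 : ∀ᶠ ε : ℝ in 𝓝[>] 0, ∀ A : Finset ι, Submodule.span ℝ (w '' (A : Set ι)) ≠ ⊤ →
      (∑ i, w i) + ε • η ∉ Submodule.span ℝ (w '' (A : Set ι)) := by
    rw [Filter.eventually_all]
    intro A
    by_cases hA : Submodule.span ℝ (w '' (A : Set ι)) = ⊤
    · exact Filter.Eventually.of_forall fun _ h => absurd hA h
    · exact (eventually_notMem _ _ (hηgen A hA)).mono fun _ h _ => h
  obtain ⟨ε, h1, h2⟩ := (hev1.and hev2).exists
  refine ⟨fun i => 1 + ε * μ i, h1, ?_⟩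
  have : ∑ i, (1 + ε * μ i) • w i = (∑ i, w i) + ε • η := by
    simp only [add_smul, one_smul, mul_smul, Finset.sum_add_distrib, ← Finset.smul_sum, hμ]
  rw [this]
  exact h2

/-- The maximal cells, made half-open by discarding the points `x` for which `x + ε • η` leaves the
cell for small `ε > 0`. -/
def cellCone {B : Finset ι} (hB : IsCell w h B) (η : V) : Set V :=
  halfOpenCone hB.basis fun i => 0 < hB.basis.repr η i

lemma cellCone_eventually {B : Finset ι} (hB : IsCell w h B) {η x : V} (hx : x ∈ cellCone hB η) :
    ∀ᶠ ε : ℝ in 𝓝[>] 0, ∀ i, 0 < hB.basis.repr (x + ε • η) i := by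
  rw [Filter.eventually_all]
  intro i
  filter_upwards [eventually_pos_combo (hx i)] with ε hε
  simpa using hε

lemma cell_extend {B : Finset ι} (hB : IsCell w h B) (x : V) :
    ∑ j, (if hj : j ∈ B then hB.basis.repr x ⟨j, hj⟩ else 0) • w j = x := by
  rw [sum_extend B (fun j => hB.basis.repr x j) w]
  conv_rhs => rw [← hB.basis.sum_repr x]
  simp only [IsCell.basis_apply]

lemma mem_coneOf_of_repr_nonneg {B : Finset ι} (hB : IsCell w h B) {x : V}
    (hx : ∀ i, 0 ≤ hB.basis.repr x i) : x ∈ coneOf w := by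
  refine ⟨_, fun i => ?_, cell_extend hB x⟩
  split_ifs
  · exact hx _
  · exact le_rfl

lemma cellCone_unique (hh : GenericHeight w h) {B B' : Finset ι} (hB : IsCell w h B)
    (hB' : IsCell w h B') {η x : V} (hx : x ∈ cellCone hB η) (hx' : x ∈ cellCone hB' η) :
    B = B' := by
  obtain ⟨ε, h1, h2⟩ := ((cellCone_eventually hB hx).and (cellCone_eventually hB' hx')).exists
  refine isCell_unique hh hB hB' (fun i hi => ?_) (fun i hi => ?_) (fun i hi => ?_)
    (fun i hi => ?_) ((cell_extend hB (x + ε • η)).trans (cell_extend hB' (x + ε • η)).symm)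
  · simp only [hi, dite_true]; exact h1 _
  · simp [hi]
  · simp only [hi, dite_true]; exact h2 _
  · simp [hi]

lemma exists_cellCone {t : V →ₗ[ℝ] ℝ} (hwt : ∀ i, t (w i) = 1) (hh : GenericHeight w h) {η x : V}
    (hη : GenericVec w η) (hfr : ∃ᶠ ε : ℝ in 𝓝[>] 0, x + ε • η ∈ coneOf w) :
    ∃ (B : Finset ι) (hB : IsCell w h B), x ∈ cellCone hB η := by
  have hgen : ∀ᶠ ε : ℝ in 𝓝[>] 0, GenericVec w (x + ε • η) := by
    unfold GenericVec
    rw [Filter.eventually_all]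
    intro A
    by_cases hA : Submodule.span ℝ (w '' (A : Set ι)) = ⊤
    · exact Filter.Eventually.of_forall fun _ h => absurd hA h
    · exact (eventually_notMem _ _ (hη A hA)).mono fun _ h _ => h
  have hfr2 : ∃ᶠ ε : ℝ in 𝓝[>] 0, ∃ B : Finset ι, ∃ hB : IsCell w h B,
      ∀ i, 0 < hB.basis.repr (x + ε • η) i := by
    refine (hfr.and_eventually hgen).mono fun ε hε => ?_
    obtain ⟨B, hB, c, hc, hc0, hcx⟩ := exists_cell hwt hh hε.1 hε.2
    refine ⟨B, hB, fun i => ?_⟩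
    have : ∑ j : B, c j • hB.basis j = x + ε • η := by
      simp only [IsCell.basis_apply]
      rw [Finset.sum_coe_sort B (fun j => c j • w j), ← hcx]
      exact Finset.sum_subset (Finset.subset_univ B) (fun j _ hj => by simp [hc0 j hj])
    rw [← this, hB.basis.repr_sum_self]
    exact hc i i.2
  by_contra hcon
  push Not at hcon
  refine hfr2 ?_
  simp only [not_exists]
  rw [Filter.eventually_all]
  intro B
  by_cases hB : IsCell w h B
  · have := hcon B hB
    by_contra hcontra
    apply this
    have hf : ∃ᶠ ε : ℝ in 𝓝[>] 0, ∀ i, 0 < hB.basis.repr (x + ε • η) i := by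
      intro hev
      exact hcontra (hev.mono fun _ h _ => h)
    intro i
    refine pos_combo_of_frequently (hf.mono fun ε hε => ?_)
    simpa using hε i
  · exact Filter.Eventually.of_forall fun _ h => absurd h hB

lemma repr_ne_zero_of_generic {B : Finset ι} (hB : IsCell w h B) {η : V} (hη : GenericVec w η)
    (i : B) : hB.basis.repr η i ≠ 0 := by
  intro h0
  have hmem : η ∈ Submodule.span ℝ (w '' ((B.erase i : Finset ι) : Set ι)) := by
    rw [← hB.basis.sum_repr η]
    refine Submodule.sum_mem _ fun j _ => ?_
    by_cases hj : j = i
    · rw [hj, h0, zero_smul]; exact Submodule.zero_mem _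
    · refine Submodule.smul_mem _ _ (Submodule.subset_span ⟨j, ?_, ?_⟩)
      · simp only [Finset.coe_erase, Set.mem_sdiff, Set.mem_singleton_iff]
        exact ⟨j.2, fun h => hj (Subtype.ext h)⟩
      · rw [IsCell.basis_apply]
  refine hη _ (fun htop => ?_) hmem
  have h1 := hB.1.notMem_span_image (s := {j : B | j ≠ i}) (x := i) (by simp)
  apply h1
  have : (fun j : B => w j) '' {j : B | j ≠ i} = w '' ((B.erase i : Finset ι) : Set ι) := by
    ext y
    constructor
    · rintro ⟨j, hj, rfl⟩
      exact ⟨j, by simpa using fun h => hj (Subtype.ext h), rfl⟩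
    · rintro ⟨j, hj, rfl⟩
      have hj' := Finset.mem_erase.mp (Finset.mem_coe.mp hj)
      exact ⟨⟨j, hj'.2⟩, fun h => hj'.1 (congrArg Subtype.val h), rfl⟩
  rw [this, htop]
  trivial

lemma GenericVec.neg {η : V} (hη : GenericVec w η) : GenericVec w (-η) := fun A hA hmem =>
  hη A hA (by simpa using hmem)

lemma cellCone_neg {B : Finset ι} (hB : IsCell w h B) {η : V} (hη : GenericVec w η) :
    cellCone hB (-η) = halfOpenCone hB.basis fun i => ¬ 0 < hB.basis.repr η i := by
  unfold cellCone
  congr 1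
  funext i
  have := repr_ne_zero_of_generic hB hη i
  simp only [map_neg, Finsupp.neg_apply, Left.neg_pos_iff, not_lt, eq_iff_iff]
  exact ⟨fun h => h.le, fun h => lt_of_le_of_ne h this⟩

/-- The half-open cells of a generic direction pointing into the cone partition the cone;
their disjointness is `cellCone_unique`. -/
lemma mem_coneOf_iff_cellCone {t : V →ₗ[ℝ] ℝ} (hwt : ∀ i, t (w i) = 1) (hh : GenericHeight w h)
    {c : ι → ℝ} (hc : ∀ i, 0 < c i) (hη : GenericVec w (∑ i, c i • w i)) (x : V) :
    x ∈ coneOf w ↔ ∃ (B : Finset ι) (hB : IsCell w h B), x ∈ cellCone hB (∑ i, c i • w i) := by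
  constructor
  · intro hx
    refine exists_cellCone hwt hh hη (Filter.Eventually.frequently ?_)
    filter_upwards [self_mem_nhdsWithin] with ε hε
    exact coneOf_add hx (coneOf_smul (le_of_lt hε) ⟨c, fun i => (hc i).le, rfl⟩)
  · rintro ⟨B, hB, hx⟩
    refine mem_coneOf_of_repr_nonneg hB fun i => ?_
    rcases hx i with h | h
    · exact h.le
    · exact h.1.ge

/-- With the opposite direction, the half-open cells partition the relative interior. -/
lemma mem_coneRelint_iff_cellCone {t : V →ₗ[ℝ] ℝ} (hwt : ∀ i, t (w i) = 1)
    (hh : GenericHeight w h) {c : ι → ℝ} (hc : ∀ i, 0 < c i)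
    (hη : GenericVec w (∑ i, c i • w i)) (x : V) :
    x ∈ coneRelint w ↔
      ∃ (B : Finset ι) (hB : IsCell w h B), x ∈ cellCone hB (-∑ i, c i • w i) := by
  have hξ : ∑ i, c i • w i ∈ coneOf w := ⟨c, fun i => (hc i).le, rfl⟩
  constructor
  · rintro ⟨hx, hx'⟩
    obtain ⟨ε₀, hε₀, hmem⟩ := hx' _ hξ
    refine exists_cellCone hwt hh hη.neg (Filter.Eventually.frequently ?_)
    filter_upwards [mem_nhdsWithin_of_mem_nhds (Iio_mem_nhds hε₀)] with ε hε
    have : x + ε • (-∑ i, c i • w i) =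
        (x - ε₀ • ∑ i, c i • w i) + (ε₀ - ε) • ∑ i, c i • w i := by
      rw [smul_neg, sub_smul]; abel
    rw [this]
    exact coneOf_add hmem (coneOf_smul (sub_nonneg.mpr (le_of_lt hε)) hξ)
  · rintro ⟨B, hB, hx⟩
    obtain ⟨ε, h1, hε⟩ := ((cellCone_eventually hB hx).and self_mem_nhdsWithin).exists
    have hε : 0 < ε := hε
    have h2 := mem_coneOf_of_repr_nonneg hB fun i => (h1 i).le
    have h3 := add_mem_coneRelint (c := fun i => ε * c i) (fun i => mul_pos hε (hc i)) h2
    have : x + ε • (-∑ i, c i • w i) + ∑ i, (ε * c i) • w i = x := by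
      simp only [mul_smul, ← Finset.smul_sum, smul_neg]; abel
    rwa [this] at h3

/-- Reciprocity for cones over lattice polytopes. -/
theorem cone_reciprocity [Nonempty ι] {Λ : AddSubgroup V} {t : V →ₗ[ℝ] ℝ}
    (hspan : Submodule.span ℝ (Set.range w) = ⊤)
    (hfin : ∀ (B : Finset ι) (b : Module.Basis B ℝ V), (∀ i, b i = w i) →
      ∀ R : ℝ, {m | m ∈ Λ ∧ ∀ i, |b.repr m i| ≤ R}.Finite)
    (hwΛ : ∀ i, w i ∈ Λ) (hwt : ∀ i, t (w i) = 1) (ht : ∀ m ∈ Λ, ∃ z : ℤ, t m = z)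
    (φ : V → ℂ) (hφ : ∀ (B : Finset ι) (p : V), ∃ Q : MvPolynomial B ℂ, ∀ k : B → ℝ,
      φ (p + ∑ i, k i • w i) = MvPolynomial.eval (fun i => (k i : ℂ)) Q) :
    ∃ D : ℂ[X], ∀ q : ℕ, 0 < q →
      D.eval (q : ℂ) = ∑ᶠ m ∈ {m | m ∈ Λ ∧ m ∈ coneOf w ∧ t m = (q : ℝ)}, φ m ∧
      D.eval (-(q : ℂ)) = (-1) ^ (Module.finrank ℝ V - 1) *
        ∑ᶠ m ∈ {m | m ∈ Λ ∧ m ∈ coneRelint w ∧ t m = (q : ℝ)}, φ (-m) := by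
  obtain ⟨h, hh⟩ := exists_genericHeight w
  obtain ⟨c, hc, hη⟩ := exists_generic_interior hspan
  set ξ := ∑ i, c i • w i with hξ
  let T := {B : Finset ι // IsCell w h B}
  have hcard : ∀ B : T, Fintype.card B.1 = Module.finrank ℝ V := fun B =>
    (Module.finrank_eq_card_basis B.2.basis).symm
  have hne : ∀ B : T, Nonempty B.1 := by
    rintro ⟨B, hB⟩
    by_contra hemp
    rw [not_nonempty_iff] at hemp
    obtain ⟨i⟩ := ‹Nonempty ι›
    have h0 : w i = 0 := by rw [← hB.basis.sum_repr (w i)]; simp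
    have := hwt i
    rw [h0, map_zero] at this
    exact zero_ne_one this
  have key : ∀ B : T, _ := fun B => by
    haveI := hne B
    exact halfOpen_reciprocity (Λ := Λ) (t := t) (b := B.2.basis)
      (hfin B.1 B.2.basis B.2.basis_apply)
      (fun i => by rw [B.2.basis_apply]; exact hwΛ i)
      (fun i => by rw [B.2.basis_apply]; exact hwt i) ht φ
      (fun p => by simp only [B.2.basis_apply]; exact hφ B.1 p)
      (fun i => 0 < B.2.basis.repr ξ i)
  choose D hD using key
  have hslice : ∀ (η : V) (q : ℕ) (B : T),
      {m | m ∈ Λ ∧ m ∈ cellCone B.2 η ∧ t m = (q : ℝ)}.Finite := fun η q B =>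
    halfOpen_slice_finite (hfin B.1 B.2.basis B.2.basis_apply)
      (fun i => by rw [B.2.basis_apply]; exact hwt i) _ _
  have hdisj : ∀ (η : V) (q : ℕ), Pairwise fun B B' : T =>
      Disjoint {m | m ∈ Λ ∧ m ∈ cellCone B.2 η ∧ t m = (q : ℝ)}
        {m | m ∈ Λ ∧ m ∈ cellCone B'.2 η ∧ t m = (q : ℝ)} := by
    intro η q B B' hBB
    rw [Set.disjoint_left]
    intro m hm hm'
    exact hBB (Subtype.ext (cellCone_unique hh B.2 B'.2 hm.2.1 hm'.2.1))
  refine ⟨∑ B, D B, fun q hq => ⟨?_, ?_⟩⟩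
  · have hU : {m | m ∈ Λ ∧ m ∈ coneOf w ∧ t m = (q : ℝ)} =
        ⋃ B : T, {m | m ∈ Λ ∧ m ∈ cellCone B.2 ξ ∧ t m = (q : ℝ)} := by
      ext m
      simp only [Set.mem_iUnion, Set.mem_ofPred_eq, mem_coneOf_iff_cellCone hwt hh hc hη m]
      constructor
      · rintro ⟨h1, ⟨B, hB, h2⟩, h3⟩; exact ⟨⟨B, hB⟩, h1, h2, h3⟩
      · rintro ⟨⟨B, hB⟩, h1, h2, h3⟩; exact ⟨h1, ⟨B, hB, h2⟩, h3⟩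
    rw [hU, finsum_mem_iUnion (hdisj ξ q) (hslice ξ q), finsum_eq_sum_of_fintype, eval_finsetSum]
    exact Finset.sum_congr rfl fun B _ => (hD B q hq).1
  · have hU : {m | m ∈ Λ ∧ m ∈ coneRelint w ∧ t m = (q : ℝ)} =
        ⋃ B : T, {m | m ∈ Λ ∧ m ∈ cellCone B.2 (-ξ) ∧ t m = (q : ℝ)} := by
      ext m
      simp only [Set.mem_iUnion, Set.mem_ofPred_eq, mem_coneRelint_iff_cellCone hwt hh hc hη m]
      constructor
      · rintro ⟨h1, ⟨B, hB, h2⟩, h3⟩; exact ⟨⟨B, hB⟩, h1, h2, h3⟩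
      · rintro ⟨⟨B, hB⟩, h1, h2, h3⟩; exact ⟨h1, ⟨B, hB, h2⟩, h3⟩
    rw [hU, finsum_mem_iUnion (hdisj (-ξ) q) (hslice (-ξ) q), finsum_eq_sum_of_fintype,
      eval_finsetSum, Finset.mul_sum]
    refine Finset.sum_congr rfl fun B _ => ?_
    rw [(hD B q hq).2, hcard B, cellCone_neg B.2 hη]

end Decomposition

end ConeDecomposition

/-! ### Farkas' lemma and the faces of a polytope -/

section Farkas

/-- **Farkas' lemma** for finitely many linear functionals on an arbitrary real vector space,
by induction on their number. -/
lemma farkas {ι W : Type*} [AddCommGroup W] [Module ℝ W] (s : Finset ι) :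
    ∀ (a : ι → W →ₗ[ℝ] ℝ) (γ : W →ₗ[ℝ] ℝ), (∀ x, (∀ i ∈ s, a i x ≤ 0) → γ x ≤ 0) →
      ∃ c : ι → ℝ, (∀ i ∈ s, 0 ≤ c i) ∧ γ = ∑ i ∈ s, c i • a i := by
  induction s using Finset.induction_on with
  | empty =>
    intro a γ h
    refine ⟨0, by simp, ?_⟩
    ext x
    have h1 := h x (by simp)
    have h2 := h (-x) (by simp)
    simp only [map_neg] at h2
    simp
    linarith
  | insert j s hj ih =>
    intro a γ h
    by_cases hc : ∀ x, (∀ i ∈ s, a i x ≤ 0) → γ x ≤ 0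
    · obtain ⟨c, hc, hγ⟩ := ih a γ hc
      refine ⟨fun i => if i = j then 0 else c i, fun i hi => ?_, ?_⟩
      · dsimp only
        split_ifs with hij
        · exact le_rfl
        · exact hc i ((Finset.mem_insert.mp hi).resolve_left hij)
      · rw [Finset.sum_insert hj, hγ]
        simp only [if_true, zero_smul, zero_add]
        refine Finset.sum_congr rfl fun i hi => ?_
        rw [if_neg (ne_of_mem_of_not_mem hi hj)]
    · push Not at hc
      obtain ⟨x1, hx1, hγ1⟩ := hc
      have hj1 : 0 < a j x1 := by
        by_contra hneg
        refine absurd (h x1 fun i hi => ?_) (not_le.mpr hγ1)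
        rcases Finset.mem_insert.mp hi with rfl | hi
        · exact not_lt.mp hneg
        · exact hx1 i hi
      -- normalise the violating vector so that `a j` takes the value `1` on it
      obtain ⟨x0, hx0, hγ0, hj0⟩ : ∃ x0, (∀ i ∈ s, a i x0 ≤ 0) ∧ 0 < γ x0 ∧ a j x0 = 1 := by
        refine ⟨(a j x1)⁻¹ • x1, fun i hi => ?_, ?_, ?_⟩
        · rw [map_smul, smul_eq_mul]
          exact mul_nonpos_of_nonneg_of_nonpos (by positivity) (hx1 i hi)
        · rw [map_smul, smul_eq_mul]; positivity
        · rw [map_smul, smul_eq_mul]; field_simp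
      obtain ⟨c, hc, hγ⟩ := ih (fun i => a i - a i x0 • a j) (γ - γ x0 • a j) (by
        intro x hx
        have := h (x - a j x • x0) (fun i hi => by
          rcases Finset.mem_insert.mp hi with rfl | hi
          · simp [hj0]
          · have := hx i hi
            simp only [LinearMap.sub_apply, LinearMap.smul_apply, smul_eq_mul] at this
            simp only [map_sub, map_smul, smul_eq_mul]
            linarith)
        simp only [map_sub, map_smul, smul_eq_mul] at this
        simp only [LinearMap.sub_apply, LinearMap.smul_apply, smul_eq_mul]
        linarith)
      refine ⟨fun i => if i = j then γ x0 - ∑ i ∈ s, c i * a i x0 else c i, fun i hi => ?_, ?_⟩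
      · dsimp only
        split_ifs with hij
        · have : ∑ i ∈ s, c i * a i x0 ≤ 0 := Finset.sum_nonpos fun i hi =>
            mul_nonpos_of_nonneg_of_nonpos (hc i hi) (hx0 i hi)
          linarith
        · exact hc i ((Finset.mem_insert.mp hi).resolve_left hij)
      · rw [Finset.sum_insert hj]
        simp only [if_true]
        have h2 : ∑ i ∈ s, (if i = j then γ x0 - ∑ i ∈ s, c i * a i x0 else c i) • a i
            = ∑ i ∈ s, c i • a i := Finset.sum_congr rfl fun i hi => by
          rw [if_neg (ne_of_mem_of_not_mem hi hj)]
        rw [h2]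
        ext x
        have := congrArg (fun f => f x) hγ
        simp only [LinearMap.sub_apply, LinearMap.smul_apply, smul_eq_mul, LinearMap.sum_apply,
          LinearMap.add_apply, mul_sub, Finset.sum_sub_distrib, sub_mul, Finset.sum_mul] at this ⊢
        have h3 : ∑ i ∈ s, c i * (a i x0 * a j x) = ∑ i ∈ s, c i * a i x0 * a j x :=
          Finset.sum_congr rfl fun i _ => by ring
        linarith

end Farkas

section Faces

variable {n : ℕ} {P E F : Set (Fin n → ℝ)}

/-- The relative interior of a convex set, in algebraic form: from `x` one can move a little
beyond `x` along every segment from a point of `F` to `x` without leaving `F`. -/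
def relintSet (F : Set (Fin n → ℝ)) : Set (Fin n → ℝ) :=
  {x | x ∈ F ∧ ∀ y ∈ F, ∃ ε : ℝ, 0 < ε ∧ x + ε • (x - y) ∈ F}

lemma IsFaceOf.exists_functional (hne : P.Nonempty) (hF : IsFaceOf P F) :
    F.Nonempty ∧ ∃ u : (Fin n → ℝ) →ₗ[ℝ] ℝ, F = {x | x ∈ P ∧ ∀ p ∈ P, u p ≤ u x} := by
  rcases hF with rfl | h
  · exact ⟨hne, 0, by ext; simp⟩
  · exact h

lemma IsFaceOf.subset (hF : IsFaceOf P F) : F ⊆ P := by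
  rcases hF with rfl | ⟨_, u, rfl⟩
  · exact subset_rfl
  · exact fun x hx => hx.1

lemma IsFaceOf.convex (hP : Convex ℝ P) (hF : IsFaceOf P F) : Convex ℝ F := by
  rcases hF with rfl | ⟨_, u, rfl⟩
  · exact hP
  · intro x hx y hy a b ha hb hab
    refine ⟨hP hx.1 hy.1 ha hb hab, fun p hp => ?_⟩
    have h1 := mul_le_mul_of_nonneg_left (hx.2 p hp) ha
    have h2 := mul_le_mul_of_nonneg_left (hy.2 p hp) hb
    simp only [map_add, map_smul, smul_eq_mul]
    have : u p = a * u p + b * u p := by rw [← add_mul, hab, one_mul]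
    linarith

lemma face_subset_of_mem_relint (hne : P.Nonempty) (hF : IsFaceOf P F) (hE : E ⊆ P)
    {x : Fin n → ℝ} (hx : x ∈ relintSet E) (hxF : x ∈ F) : E ⊆ F := by
  obtain ⟨_, u, rfl⟩ := hF.exists_functional hne
  intro y hy
  obtain ⟨ε, hε, hz⟩ := hx.2 y hy
  refine ⟨hE hy, fun p hp => (hxF.2 p hp).trans ?_⟩
  have := hxF.2 _ (hE hz)
  simp only [map_add, map_smul, map_sub, smul_eq_mul] at this
  nlinarith

lemma face_eq_of_mem_relint (hne : P.Nonempty) (hF : IsFaceOf P F) (hE : IsFaceOf P E)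
    {x : Fin n → ℝ} (hx : x ∈ relintSet E) (hxF : x ∈ relintSet F) : E = F :=
  (face_subset_of_mem_relint hne hF hE.subset hx hxF.1).antisymm
    (face_subset_of_mem_relint hne hE hF.subset hxF hx.1)

/-- A face is spanned by the generators lying on it. -/
lemma face_eq_convexHull {A : Finset (Fin n → ℝ)} (hne : P.Nonempty)
    (hP : P = convexHull ℝ (A : Set (Fin n → ℝ)))
    (hF : IsFaceOf P F) :
    F = convexHull ℝ ((A.filter (· ∈ F) : Finset (Fin n → ℝ)) : Set (Fin n → ℝ)) := by
  have hconv : Convex ℝ F := hF.convex (hP ▸ convex_convexHull ℝ _)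
  refine Set.Subset.antisymm ?_ (convexHull_min (fun x hx => by simp at hx; exact hx.2) hconv)
  obtain ⟨_, u, hFu⟩ := hF.exists_functional hne
  intro x hx
  have hxP : x ∈ P := hF.subset hx
  rw [hP, Finset.mem_convexHull'] at hxP
  obtain ⟨c, hc, hc1, hcx⟩ := hxP
  have hAP : ∀ a ∈ A, a ∈ P := fun a ha => hP ▸ subset_convexHull ℝ _ ha
  have hxu : ∀ p ∈ P, u p ≤ u x := (hFu ▸ hx).2
  have hzero : ∑ a ∈ A, c a * (u x - u a) = 0 := by
    simp only [mul_sub, Finset.sum_sub_distrib, ← Finset.sum_mul, hc1, one_mul]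
    conv_lhs => rw [← hcx]
    simp
  have hterm := (Finset.sum_eq_zero_iff_of_nonneg (fun a ha =>
    mul_nonneg (hc a ha) (sub_nonneg.mpr (hxu a (hAP a ha))))).mp hzero
  have hout : ∀ a ∈ A, a ∉ A.filter (· ∈ F) → c a = 0 := by
    intro a ha hna
    refine (mul_eq_zero.mp (hterm a ha)).resolve_right fun h0 => hna ?_
    refine Finset.mem_filter.mpr ⟨ha, ?_⟩
    rw [hFu]
    exact ⟨hAP a ha, fun p hp => by linarith [hxu p hp]⟩
  rw [Finset.mem_convexHull']
  refine ⟨c, fun a ha => hc a (Finset.mem_of_mem_filter a ha), ?_, ?_⟩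
  · rw [← hc1]; exact Finset.sum_subset (Finset.filter_subset _ _) hout
  · rw [← hcx]
    exact Finset.sum_subset (Finset.filter_subset _ _) fun a ha hna => by
      rw [hout a ha hna, zero_smul]

/-- Every point of a polytope lies in the relative interior of some face: a minimal face
containing the point. -/
lemma exists_face_mem_relint {A : Finset (Fin n → ℝ)}
    (hP : P = convexHull ℝ (A : Set (Fin n → ℝ)))
    (hfin : {F : Set (Fin n → ℝ) | IsFaceOf P F}.Finite) {x : Fin n → ℝ} (hx : x ∈ P) :
    ∃ E, IsFaceOf P E ∧ x ∈ relintSet E := by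
  have hne : P.Nonempty := ⟨x, hx⟩
  obtain ⟨E, hE, hmin⟩ : ∃ E, (IsFaceOf P E ∧ x ∈ E) ∧
      ∀ E', IsFaceOf P E' ∧ x ∈ E' → E' ⊆ E → E' = E := by
    have hf : {E | IsFaceOf P E ∧ x ∈ E}.Finite := hfin.subset fun E h => h.1
    obtain ⟨E, hE⟩ := hf.exists_minimal ⟨P, Or.inl rfl, hx⟩
    exact ⟨E, hE.prop, fun E' h' hs => hs.antisymm (hE.le_of_le h' hs)⟩
  obtain ⟨hEf, hxE⟩ := hE
  refine ⟨E, hEf, hxE, fun y hy => ?_⟩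
  obtain ⟨_, u0, hEu⟩ := hEf.exists_functional hne
  have hAP : ∀ a ∈ A, a ∈ P := fun a ha => hP ▸ subset_convexHull ℝ _ ha
  have hx0 : ∀ p ∈ P, u0 p ≤ u0 x := (hEu ▸ hxE).2
  have hy0 : ∀ p ∈ P, u0 p ≤ u0 y := (hEu ▸ hy).2
  -- every functional maximal at `x` is constant on the minimal face
  have key : ∀ u : (Fin n → ℝ) →ₗ[ℝ] ℝ, (∀ p ∈ P, u p ≤ u x) → u x ≤ u y := by
    intro u hu
    have hE' : {z | z ∈ P ∧ ∀ p ∈ P, (u0 + u) p ≤ (u0 + u) z} = E := by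
      refine hmin _ ⟨Or.inr ⟨⟨x, ?_⟩, u0 + u, rfl⟩, ?_⟩ ?_
      · exact ⟨hx, fun p hp => add_le_add (hx0 p hp) (hu p hp)⟩
      · exact ⟨hx, fun p hp => add_le_add (hx0 p hp) (hu p hp)⟩
      · intro z hz
        rw [hEu]
        refine ⟨hz.1, fun p hp => ?_⟩
        have h1 := hz.2 x hx
        simp only [LinearMap.add_apply] at h1
        linarith [hu z hz.1, hx0 p hp]
    have hyE : y ∈ {z | z ∈ P ∧ ∀ p ∈ P, (u0 + u) p ≤ (u0 + u) z} := hE' ▸ hy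
    have h1 := hyE.2 x hx
    simp only [LinearMap.add_apply] at h1
    linarith [hx0 y hyE.1]
  have hmaxA : ∀ u : (Fin n → ℝ) →ₗ[ℝ] ℝ, (∀ a ∈ A, u a ≤ u x) → ∀ p ∈ P, u p ≤ u x := by
    intro u hu p hp
    have : convexHull ℝ (A : Set (Fin n → ℝ)) ⊆ {z | u z ≤ u x} :=
      convexHull_min hu (convex_halfSpace_le u.isLinear _)
    exact this (hP ▸ hp)
  obtain ⟨c, hc, hcx⟩ := farkas (W := Module.Dual ℝ (Fin n → ℝ)) A
    (fun a => Module.Dual.eval ℝ _ (a - x)) (Module.Dual.eval ℝ _ (x - y)) (by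
      intro u hu
      simp only [map_sub, LinearMap.sub_apply, Module.Dual.eval_apply] at hu ⊢
      linarith [key u (hmaxA u fun a ha => by linarith [hu a ha])])
  have hcx' : x - y = ∑ a ∈ A, c a • (a - x) := by
    refine sub_eq_zero.mp ((Module.forall_dual_apply_eq_zero_iff ℝ _).mp fun u => ?_)
    have := congrArg (fun f => f u) hcx
    simp only [Module.Dual.eval_apply, LinearMap.sum_apply, LinearMap.smul_apply] at this
    rw [map_sub, this, map_sum]
    simp
  set C := ∑ a ∈ A, c a with hC
  have hC0 : 0 ≤ C := Finset.sum_nonneg hc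
  set ε : ℝ := (1 + C)⁻¹ with hε
  have hε0 : 0 < ε := by positivity
  have hεC : ε + ε * C = 1 := by rw [hε]; field_simp
  refine ⟨ε, hε0, ?_⟩
  -- the moved point is a convex combination of `x` and the generators
  have hzP : x + ε • (x - y) ∈ P := by
    rcases hC0.eq_or_lt with h0 | hpos
    · have : ∀ a ∈ A, c a = 0 := (Finset.sum_eq_zero_iff_of_nonneg hc).mp h0.symm
      rw [hcx', Finset.sum_eq_zero (fun a ha => by rw [this a ha, zero_smul])]
      simpa using hx
    · have hcm : C⁻¹ • ∑ a ∈ A, c a • a ∈ P := by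
        rw [hP, Finset.mem_convexHull']
        refine ⟨fun a => C⁻¹ * c a, fun a ha => mul_nonneg (by positivity) (hc a ha), ?_, ?_⟩
        · rw [← Finset.mul_sum, ← hC]; field_simp
        · rw [Finset.smul_sum]; simp only [mul_smul]
      have := (hP ▸ convex_convexHull ℝ _ : Convex ℝ P) hx hcm hε0.le
        (by positivity : 0 ≤ ε * C) hεC
      convert this using 1
      rw [hcx']
      simp only [smul_sub, Finset.sum_sub_distrib, ← Finset.sum_smul, ← hC]
      rw [smul_smul (ε * C), mul_assoc, mul_inv_cancel₀ hpos.ne', mul_one, smul_smul]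
      have : x = ε • x + (ε * C) • x := by rw [← add_smul, hεC, one_smul]
      nth_rewrite 1 [this]
      abel
  rw [hEu]
  refine ⟨hzP, fun p hp => ?_⟩
  have h1 := hx0 y (hEf.subset hy)
  have h2 := hy0 x hx
  have h3 := hx0 p hp
  simp only [map_add, map_smul, map_sub, smul_eq_mul]
  nlinarith

end Faces

/-! ### Cones over polytopes and Ehrhart reciprocity -/

section Homogenization

variable {n : ℕ}

/-- The linear span of the points `(1, a)`, `a ∈ A`: the ambient space of the cone over the
convex hull of `A`. -/
def homSpan (A : Finset (Fin n → ℝ)) : Submodule ℝ (ℝ × (Fin n → ℝ)) :=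
  Submodule.span ℝ (Set.range fun a : A => ((1 : ℝ), (a : Fin n → ℝ)))

/-- The generators `(1, a)` of the cone over the convex hull of `A`. -/
def homGen (A : Finset (Fin n → ℝ)) (a : A) : homSpan A :=
  ⟨(1, a), Submodule.subset_span ⟨a, rfl⟩⟩

/-- The height functional `(r, x) ↦ r` on the cone over the convex hull of `A`. -/
def homHeight (A : Finset (Fin n → ℝ)) : homSpan A →ₗ[ℝ] ℝ :=
  (LinearMap.fst ℝ ℝ (Fin n → ℝ)).comp (homSpan A).subtype

/-- The embedding `ℤ × ℤ^n → ℝ × ℝ^n`. -/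
def homLatticeHom (n : ℕ) : ℤ × (Fin n → ℤ) →+ ℝ × (Fin n → ℝ) where
  toFun z := (z.1, intVec z.2)
  map_zero' := by ext <;> simp [intVec]
  map_add' x y := by ext <;> simp [intVec]

/-- The lattice points of `homSpan A`. -/
def homLattice (A : Finset (Fin n → ℝ)) : AddSubgroup (homSpan A) :=
  (homLatticeHom n).range.comap (homSpan A).subtype.toAddMonoidHom

lemma mem_homLattice {A : Finset (Fin n → ℝ)} {v : homSpan A} :
    v ∈ homLattice A ↔ ∃ (z : ℤ) (m : Fin n → ℤ), (v : ℝ × (Fin n → ℝ)) = ((z : ℝ), intVec m) := by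
  simp only [homLattice, AddSubgroup.mem_comap, AddMonoidHom.mem_range, Prod.exists]
  constructor
  · rintro ⟨z, m, h⟩; exact ⟨z, m, h.symm⟩
  · rintro ⟨z, m, h⟩; exact ⟨z, m, h.symm⟩

lemma intVec_injective : Function.Injective (intVec (n := n)) := fun a b h => by
  funext i
  have := congrFun h i
  simpa [intVec] using this

variable {A : Finset (Fin n → ℝ)}

lemma homGen_coe (a : A) : (homGen A a : ℝ × (Fin n → ℝ)) = (1, (a : Fin n → ℝ)) := rfl

lemma homHeight_homGen (a : A) : homHeight A (homGen A a) = 1 := rfl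

lemma homHeight_apply (v : homSpan A) : homHeight A v = (v : ℝ × (Fin n → ℝ)).1 := rfl

lemma coe_sum_homGen (c : A → ℝ) :
    ((∑ a, c a • homGen A a : homSpan A) : ℝ × (Fin n → ℝ)) =
      (∑ a, c a, ∑ a, c a • (a : Fin n → ℝ)) := by
  rw [Submodule.coe_sum]
  ext <;> simp [homGen_coe, Prod.fst_sum, Prod.snd_sum]

lemma span_homGen : Submodule.span ℝ (Set.range (homGen A)) = ⊤ := by
  have := Submodule.span_span_coe_preimage (R := ℝ)
    (s := Set.range fun a : A => ((1 : ℝ), (a : Fin n → ℝ)))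
  refine Eq.trans ?_ this
  congr 1
  ext v
  constructor
  · rintro ⟨a, rfl⟩; exact ⟨a, rfl⟩
  · rintro ⟨a, ha⟩; exact ⟨a, Subtype.ext ha⟩

lemma exists_sum_homGen (v : homSpan A) : ∃ c : A → ℝ, ∑ a, c a • homGen A a = v := by
  have : v ∈ Submodule.span ℝ (Set.range (homGen A)) := span_homGen ▸ Submodule.mem_top
  exact (Submodule.mem_span_range_iff_exists_fun ℝ).mp this

lemma finrank_homSpan (hA : A.Nonempty) :
    Module.finrank ℝ (homSpan A) = faceDim (convexHull ℝ (A : Set (Fin n → ℝ))) + 1 := by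
  obtain ⟨a0, ha0⟩ := hA
  have hsurj : LinearMap.range (homHeight A) = ⊤ := by
    rw [LinearMap.range_eq_top]
    intro r
    exact ⟨r • homGen A ⟨a0, ha0⟩, by simp [homHeight_homGen]⟩
  have hrn := (homHeight A).finrank_range_add_finrank_ker
  rw [hsurj, finrank_top, Module.finrank_self] at hrn
  set g : homSpan A →ₗ[ℝ] (Fin n → ℝ) :=
    (LinearMap.snd ℝ ℝ (Fin n → ℝ)).comp (homSpan A).subtype with hg
  have hinj : Function.Injective (g.domRestrict (LinearMap.ker (homHeight A))) := by
    refine (injective_iff_map_eq_zero _).mpr ?_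
    rintro ⟨v, hv⟩ h
    have h1 : (v : ℝ × (Fin n → ℝ)).1 = 0 := hv
    have h2 : (v : ℝ × (Fin n → ℝ)).2 = 0 := h
    ext1
    ext1
    exact Prod.ext h1 h2
  have hfr := LinearMap.finrank_range_of_inj hinj
  have hrange : LinearMap.range (g.domRestrict (LinearMap.ker (homHeight A))) =
      (affineSpan ℝ (convexHull ℝ (A : Set (Fin n → ℝ)))).direction := by
    rw [affineSpan_convexHull, direction_affineSpan]
    apply le_antisymm
    · rintro _ ⟨⟨v, hv⟩, rfl⟩
      obtain ⟨c, hc⟩ := exists_sum_homGen v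
      have hcoe := coe_sum_homGen c
      rw [hc] at hcoe
      have h0 : ∑ a, c a = 0 := by
        have : (v : ℝ × (Fin n → ℝ)).1 = 0 := hv
        rw [hcoe] at this; exact this
      have h2 : g v = ∑ a, c a • ((a : Fin n → ℝ) - a0) := by
        simp only [smul_sub, Finset.sum_sub_distrib, ← Finset.sum_smul, h0, zero_smul, sub_zero]
        change (v : ℝ × (Fin n → ℝ)).2 = _
        rw [hcoe]
      change g v ∈ _
      rw [h2]
      exact Submodule.sum_mem _ fun a _ => Submodule.smul_mem _ _
        (vsub_mem_vectorSpan ℝ a.2 ha0)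
    · rw [vectorSpan_def, Submodule.span_le]
      rintro _ ⟨a, ha, b, hb, rfl⟩
      refine ⟨⟨homGen A ⟨a, ha⟩ - homGen A ⟨b, hb⟩, ?_⟩, ?_⟩
      · simp [homHeight_homGen]
      · simp [hg, homGen_coe]
  rw [faceDim, ← hrange, hfr]
  omega

lemma homHeight_nonneg {v : homSpan A} (hv : v ∈ coneOf (homGen A)) : 0 ≤ homHeight A v := by
  obtain ⟨c, hc, rfl⟩ := hv
  simp only [map_sum, map_smul, homHeight_homGen, smul_eq_mul, mul_one]
  exact Finset.sum_nonneg fun i _ => hc i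

lemma eq_zero_of_homHeight {v : homSpan A} (hv : v ∈ coneOf (homGen A))
    (h0 : homHeight A v = 0) : v = 0 := by
  obtain ⟨c, hc, rfl⟩ := hv
  simp only [map_sum, map_smul, homHeight_homGen, smul_eq_mul, mul_one] at h0
  have := (Finset.sum_eq_zero_iff_of_nonneg fun i _ => hc i).mp h0
  exact Finset.sum_eq_zero fun i hi => by rw [this i hi, zero_smul]

lemma mem_homCone_iff {v : homSpan A} (hv : 0 < homHeight A v) :
    v ∈ coneOf (homGen A) ↔
      (homHeight A v)⁻¹ • (v : ℝ × (Fin n → ℝ)).2 ∈ convexHull ℝ (A : Set (Fin n → ℝ)) := by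
  rw [Finset.mem_convexHull']
  constructor
  · rintro ⟨c, hc, rfl⟩
    have hh : homHeight A (∑ a, c a • homGen A a) = ∑ a, c a := by
      rw [homHeight_apply, coe_sum_homGen]
    rw [hh] at hv ⊢
    rw [coe_sum_homGen]
    refine ⟨fun a => if h : a ∈ A then (∑ a, c a)⁻¹ * c ⟨a, h⟩ else 0, fun a ha => ?_, ?_, ?_⟩
    · simp only [ha, dite_true]
      exact mul_nonneg (by positivity) (hc _)
    · rw [← Finset.sum_coe_sort]
      simp only [Finset.coe_mem, dite_true, ← Finset.mul_sum]
      exact inv_mul_cancel₀ hv.ne'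
    · rw [← Finset.sum_coe_sort]
      simp only [Finset.coe_mem, dite_true, Finset.smul_sum, mul_smul]
  · rintro ⟨c, hc, hc1, hcx⟩
    refine ⟨fun a => homHeight A v * c a, fun a => mul_nonneg hv.le (hc a a.2), ?_⟩
    apply Subtype.ext
    rw [coe_sum_homGen]
    refine Prod.ext ?_ ?_
    · dsimp only
      rw [← Finset.mul_sum, Finset.sum_coe_sort A c, hc1, mul_one, homHeight_apply]
    · dsimp only
      simp only [mul_smul]
      rw [← Finset.smul_sum, Finset.sum_coe_sort A (fun a => c a • a), hcx, smul_inv_smul₀ hv.ne']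

lemma exists_homSpan {x : Fin n → ℝ} (hx : x ∈ convexHull ℝ (A : Set (Fin n → ℝ))) :
    ∃ v : homSpan A, (v : ℝ × (Fin n → ℝ)) = (1, x) := by
  rw [Finset.mem_convexHull'] at hx
  obtain ⟨c, -, hc1, hcx⟩ := hx
  refine ⟨∑ a : A, c a • homGen A a, ?_⟩
  rw [coe_sum_homGen (fun a : A => c a), Finset.sum_coe_sort A c, hc1,
    Finset.sum_coe_sort A (fun a => c a • a), hcx]

lemma mem_homCone_relint_iff {v : homSpan A} (hv : 0 < homHeight A v) :
    v ∈ coneRelint (homGen A) ↔ (homHeight A v)⁻¹ • (v : ℝ × (Fin n → ℝ)).2 ∈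
      relintSet (convexHull ℝ (A : Set (Fin n → ℝ))) := by
  set q := homHeight A v with hq
  constructor
  · rintro ⟨hvc, hvr⟩
    refine ⟨(mem_homCone_iff hv).mp hvc, fun y hy => ?_⟩
    obtain ⟨Y, hY⟩ := exists_homSpan hy
    have hYt : homHeight A Y = 1 := by rw [homHeight_apply, hY]
    have hYc : Y ∈ coneOf (homGen A) := by
      rw [mem_homCone_iff (by rw [hYt]; exact one_pos), hYt, hY]; simpa using hy
    obtain ⟨ε, hε, hvε⟩ := hvr Y hYc
    have hnn := homHeight_nonneg hvε
    rw [map_sub, map_smul, hYt, smul_eq_mul, mul_one, ← hq] at hnn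
    -- halving `ε` keeps the height of the moved point positive
    have hhalf : v - (ε / 2) • Y ∈ coneOf (homGen A) := by
      have := coneOf_add (coneOf_smul (by norm_num : (0 : ℝ) ≤ 1 / 2) hvc)
        (coneOf_smul (by norm_num : (0 : ℝ) ≤ 1 / 2) hvε)
      convert this using 1
      module
    have hth : homHeight A (v - (ε / 2) • Y) = q - ε / 2 := by
      rw [map_sub, map_smul, hYt, smul_eq_mul, mul_one]
    have hpos : 0 < q - ε / 2 := by linarith
    have hpos2 : q * 2 - ε ≠ 0 := by linarith
    rw [mem_homCone_iff (by rw [hth]; exact hpos), hth] at hhalf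
    refine ⟨(ε / 2) / (q - ε / 2), by positivity, ?_⟩
    convert hhalf using 1
    simp only [Submodule.coe_sub, Submodule.coe_smul, Prod.snd_sub, Prod.smul_snd, hY]
    ext i
    simp only [Pi.add_apply, Pi.smul_apply, Pi.sub_apply, smul_eq_mul]
    field_simp
    ring
  · rintro ⟨hx, hxr⟩
    refine ⟨(mem_homCone_iff hv).mpr hx, fun Y hY => ?_⟩
    rcases (homHeight_nonneg hY).eq_or_lt with h0 | hpos
    · refine ⟨1, one_pos, ?_⟩
      rw [eq_zero_of_homHeight hY h0.symm, smul_zero, sub_zero]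
      exact (mem_homCone_iff hv).mpr hx
    · set s := homHeight A Y with hs
      obtain ⟨δ, hδ, hmem⟩ := hxr _ ((mem_homCone_iff hpos).mp hY)
      refine ⟨q * δ / (1 + δ) / s, by positivity, ?_⟩
      have hth : homHeight A (v - (q * δ / (1 + δ) / s) • Y) = q / (1 + δ) := by
        rw [map_sub, map_smul, smul_eq_mul, ← hq, ← hs]
        field_simp
        ring
      rw [mem_homCone_iff (by rw [hth]; positivity), hth]
      convert hmem using 1
      simp only [Submodule.coe_sub, Submodule.coe_smul, Prod.snd_sub, Prod.smul_snd]
      ext i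
      simp only [Pi.add_apply, Pi.smul_apply, Pi.sub_apply, smul_eq_mul, ← hs]
      field_simp
      ring

lemma homLattice_finite (B : Finset A) (b : Module.Basis B ℝ (homSpan A))
    (_hb : ∀ i, b i = homGen A i) (R : ℝ) :
    {m | m ∈ homLattice A ∧ ∀ i, |b.repr m i| ≤ R}.Finite := by
  obtain ⟨K, hK⟩ := exists_nat_ge (∑ i : B, R * ‖(b i : ℝ × (Fin n → ℝ))‖)
  have hT : ((homLatticeHom n) '' (Set.Icc ((-K : ℤ), fun _ => (-K : ℤ))
    ((K : ℤ), fun _ => (K : ℤ)))).Finite := (Set.finite_Icc _ _).image _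
  refine Set.Finite.of_finite_image (f := ((↑) : homSpan A → ℝ × (Fin n → ℝ)))
    (hT.subset ?_) Subtype.coe_injective.injOn
  rintro _ ⟨v, ⟨hvΛ, hvR⟩, rfl⟩
  have hnorm : ‖(v : ℝ × (Fin n → ℝ))‖ ≤ K := by
    refine le_trans ?_ hK
    have hv := congrArg (fun v : homSpan A => (v : ℝ × (Fin n → ℝ))) (b.sum_repr v)
    rw [← hv, Submodule.coe_sum]
    refine (norm_sum_le _ _).trans (Finset.sum_le_sum fun i _ => ?_)
    rw [Submodule.coe_smul, norm_smul, Real.norm_eq_abs]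
    exact mul_le_mul_of_nonneg_right (hvR i) (norm_nonneg _)
  obtain ⟨z, m, hzm⟩ := mem_homLattice.mp hvΛ
  rw [hzm, Prod.norm_def, max_le_iff] at hnorm
  have h1 : |z| ≤ (K : ℤ) := by
    have := hnorm.1
    rw [Real.norm_eq_abs] at this
    change |(z : ℝ)| ≤ K at this
    exact_mod_cast this
  have h2 : ∀ i, |m i| ≤ (K : ℤ) := fun i => by
    have := (norm_le_pi_norm (intVec m) i).trans hnorm.2
    rw [Real.norm_eq_abs, intVec] at this
    exact_mod_cast this
  refine ⟨(z, m), ⟨⟨(abs_le.mp h1).1, fun i => (abs_le.mp (h2 i)).1⟩,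
    ⟨(abs_le.mp h1).2, fun i => (abs_le.mp (h2 i)).2⟩⟩, ?_⟩
  rw [hzm]; rfl

/-- Passing from a slice of the cone at height `q` to the lattice points of a dilate. -/
lemma finsum_slice_eq {C : Set (homSpan A)} {K : Set (Fin n → ℝ)} (hK : K ⊆ convexHull ℝ A)
    (hCK : ∀ v : homSpan A, 0 < homHeight A v →
      (v ∈ C ↔ (homHeight A v)⁻¹ • (v : ℝ × (Fin n → ℝ)).2 ∈ K))
    (ψ : (Fin n → ℝ) → ℂ) {q : ℕ} (hq : 0 < q) :
    ∑ᶠ v ∈ {v | v ∈ homLattice A ∧ v ∈ C ∧ homHeight A v = (q : ℝ)},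
        ψ (v : ℝ × (Fin n → ℝ)).2 =
      ∑ᶠ m ∈ {m : Fin n → ℤ | intVec m ∈ (q : ℝ) • K}, ψ (intVec m) := by
  have hq' : (0 : ℝ) < q := by exact_mod_cast hq
  have hfl : ∀ v ∈ homLattice A, intVec (fun i => ⌊(v : ℝ × (Fin n → ℝ)).2 i⌋) =
      (v : ℝ × (Fin n → ℝ)).2 := by
    intro v hv
    obtain ⟨z, m, hzm⟩ := mem_homLattice.mp hv
    rw [hzm]
    funext i
    simp [intVec]
  refine finsum_mem_eq_of_bijOn (fun v => fun i => ⌊(v : ℝ × (Fin n → ℝ)).2 i⌋)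
    ⟨?_, ?_, ?_⟩ (fun v hv => by rw [hfl v hv.1])
  · rintro v ⟨hvΛ, hvC, hvq⟩
    change intVec (fun i => ⌊(v : ℝ × (Fin n → ℝ)).2 i⌋) ∈ (q : ℝ) • K
    rw [hfl v hvΛ, Set.mem_smul_set_iff_inv_smul_mem₀ hq'.ne', ← hvq]
    exact (hCK v (by rw [hvq]; exact hq')).mp hvC
  · rintro v ⟨hvΛ, hvC, hvq⟩ v' ⟨hvΛ', hvC', hvq'⟩ h
    refine Subtype.ext (Prod.ext ?_ ?_)
    · rw [← homHeight_apply, ← homHeight_apply, hvq, hvq']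
    · rw [← hfl v hvΛ, ← hfl v' hvΛ']
      exact congrArg intVec h
  · intro m hm
    have hm' : (q : ℝ)⁻¹ • intVec m ∈ K := (Set.mem_smul_set_iff_inv_smul_mem₀ hq'.ne' _ _).mp hm
    obtain ⟨v, hv⟩ := exists_homSpan (hK hm')
    have hqv : (((q : ℝ) • v : homSpan A) : ℝ × (Fin n → ℝ)) = ((q : ℝ), intVec m) := by
      rw [Submodule.coe_smul, hv, Prod.smul_mk, smul_inv_smul₀ hq'.ne', smul_eq_mul, mul_one]
    have hht : homHeight A ((q : ℝ) • v) = q := by rw [homHeight_apply, hqv]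
    refine ⟨(q : ℝ) • v, ⟨mem_homLattice.mpr ⟨q, m, by rw [hqv]; simp⟩, ?_, hht⟩, ?_⟩
    · rw [hCK _ (by rw [hht]; exact hq'), hht, hqv]; exact hm'
    · dsimp only
      rw [hqv]
      funext i
      simp [intVec]

lemma eval_aeval {σ τ : Type*} (k : τ → ℂ) (g : σ → MvPolynomial τ ℂ) (p : MvPolynomial σ ℂ) :
    MvPolynomial.eval k (MvPolynomial.aeval g p) =
      MvPolynomial.eval (fun j => MvPolynomial.eval k (g j)) p := by
  induction p using MvPolynomial.induction_on <;> simp_all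

/-- **Ehrhart reciprocity** for polynomial-weighted lattice point sums over a lattice
polytope. -/
theorem polytope_reciprocity (hA : A.Nonempty) (hAint : ∀ a ∈ A, ∃ m : Fin n → ℤ, intVec m = a)
    (p : MvPolynomial (Fin n) ℂ) (φ : (Fin n → ℝ) → ℂ)
    (hφ : ∀ x, φ x = MvPolynomial.eval (fun i => (x i : ℂ)) p)
    {F : Set (Fin n → ℝ)} (hF : F = convexHull ℝ (A : Set (Fin n → ℝ))) :
    ∃ D : ℂ[X], ∀ q : ℕ, 0 < q →
      D.eval (q : ℂ) = ∑ᶠ m ∈ {m : Fin n → ℤ | intVec m ∈ (q : ℝ) • F}, φ (intVec m) ∧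
      D.eval (-(q : ℂ)) = (-1) ^ faceDim F *
        ∑ᶠ m ∈ {m : Fin n → ℤ | intVec m ∈ (q : ℝ) • relintSet F}, φ (-intVec m) := by
  have : Nonempty A := hA.to_subtype
  obtain ⟨D, hD⟩ := cone_reciprocity (w := homGen A) (Λ := homLattice A) (t := homHeight A)
    span_homGen homLattice_finite
    (fun a => by
      obtain ⟨m, hm⟩ := hAint a a.2
      exact mem_homLattice.mpr ⟨1, m, by rw [homGen_coe, hm]; simp⟩)
    homHeight_homGen
    (fun v hv => by
      obtain ⟨z, m, hzm⟩ := mem_homLattice.mp hv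
      exact ⟨z, by rw [homHeight_apply, hzm]⟩)
    (fun v => φ (v : ℝ × (Fin n → ℝ)).2)
    (fun B x => by
      refine ⟨MvPolynomial.aeval (fun j => MvPolynomial.C (((x : ℝ × (Fin n → ℝ)).2 j : ℝ) : ℂ) +
        ∑ i : B, MvPolynomial.C ((((i : A) : Fin n → ℝ) j : ℝ) : ℂ) * MvPolynomial.X i) p,
        fun k => ?_⟩
      rw [hφ, eval_aeval]
      congr 1
      congr 1
      funext j
      simp [homGen_coe, Prod.snd_sum, Finset.sum_apply, mul_comm])
  refine ⟨D, fun q hq => ⟨?_, ?_⟩⟩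
  · rw [(hD q hq).1]
    exact finsum_slice_eq (C := coneOf (homGen A)) (by rw [hF])
      (fun v hv => by rw [hF]; exact mem_homCone_iff hv) φ hq
  · rw [(hD q hq).2, finrank_homSpan hA, ← hF, Nat.add_sub_cancel]
    congr 1
    exact finsum_slice_eq (C := coneRelint (homGen A)) (by rw [hF]; exact fun x hx => hx.1)
      (fun v hv => by rw [hF]; exact mem_homCone_relint_iff hv) (fun x => φ (-x)) hq

end Homogenization

/-! ### The functional equation of the sums over faces -/

section FaceSums

variable {n : ℕ} {P E F : Set (Fin n → ℝ)} {A : Finset (Fin n → ℝ)}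

/-- The value of a complex polynomial at a real vector. -/
def evalReal (p : MvPolynomial (Fin n) ℂ) (x : Fin n → ℝ) : ℂ :=
  MvPolynomial.eval (fun i => (x i : ℂ)) p

/-- The polynomial `x ↦ p (-x)`. -/
def negPoly (p : MvPolynomial (Fin n) ℂ) : MvPolynomial (Fin n) ℂ :=
  MvPolynomial.aeval (fun i => -MvPolynomial.X i) p

lemma evalReal_negPoly (p : MvPolynomial (Fin n) ℂ) (x : Fin n → ℝ) :
    evalReal (negPoly p) x = evalReal p (-x) := by
  rw [evalReal, negPoly, eval_aeval, evalReal]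
  simp

lemma evalReal_neg_of_isHomogeneous {p : MvPolynomial (Fin n) ℂ} {d : ℕ}
    (hp : p.IsHomogeneous d) (x : Fin n → ℝ) : evalReal p (-x) = (-1) ^ d * evalReal p x := by
  have h2 : MvPolynomial.eval ((-1 : ℂ) • fun i => (x i : ℂ)) p =
      (-1) ^ d * MvPolynomial.eval (fun i => (x i : ℂ)) p := by
    rw [MvPolynomial.eval_eq, MvPolynomial.eval_eq, Finset.mul_sum]
    refine Finset.sum_congr rfl fun e he => ?_
    have hd : ∑ i, e i = d := by
      have := hp (MvPolynomial.mem_support_iff.mp he)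
      rw [Finsupp.weight_apply, Finsupp.sum_fintype _ _ (by simp)] at this
      simpa using this
    have h3 : ∏ i ∈ e.support, ((-1 : ℂ) • fun i => (x i : ℂ)) i ^ e i =
        (-1) ^ d * ∏ i ∈ e.support, (x i : ℂ) ^ e i := by
      simp only [Pi.smul_apply, smul_eq_mul, mul_pow, Finset.prod_mul_distrib,
        Finset.prod_pow_eq_pow_sum]
      congr 2
      rw [← hd]
      exact Finset.sum_subset (Finset.subset_univ _) fun i _ hi => by simpa using hi
    rw [h3]; ring
  rw [evalReal, evalReal, ← h2]
  congr 2
  funext i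
  simp

/-- The sum of `φ` over the lattice points of the dilate `qK`. -/
def latSum (φ : (Fin n → ℝ) → ℂ) (K : Set (Fin n → ℝ)) (q : ℕ) : ℂ :=
  ∑ᶠ m ∈ {m : Fin n → ℤ | intVec m ∈ (q : ℝ) • K}, φ (intVec m)

lemma lattice_finite_of_bounded {K : Set (Fin n → ℝ)} (hK : Bornology.IsBounded K) :
    {m : Fin n → ℤ | intVec m ∈ K}.Finite := by
  obtain ⟨R, hR⟩ := hK.exists_norm_le
  obtain ⟨N, hN⟩ := exists_nat_ge R
  refine (Set.finite_Icc (fun _ => (-N : ℤ)) (fun _ => (N : ℤ))).subset fun m hm => ?_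
  have h2 : ∀ i, |m i| ≤ (N : ℤ) := fun i => by
    have := (norm_le_pi_norm (intVec m) i).trans ((hR _ hm).trans hN)
    rw [Real.norm_eq_abs, intVec] at this
    exact_mod_cast this
  exact ⟨fun i => (abs_le.mp (h2 i)).1, fun i => (abs_le.mp (h2 i)).2⟩

lemma lattice_dilate_finite (hP : P = convexHull ℝ (A : Set (Fin n → ℝ)))
    {K : Set (Fin n → ℝ)} (hK : K ⊆ P) (q : ℕ) :
    {m : Fin n → ℤ | intVec m ∈ (q : ℝ) • K}.Finite := by
  have hb : Bornology.IsBounded P := by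
    rw [hP]; exact (A.finite_toSet.isCompact_convexHull (𝕜 := ℝ)).isBounded
  exact lattice_finite_of_bounded ((hb.subset hK).smul₀ _)

/-- A face is the disjoint union of the relative interiors of its faces. -/
lemma latSum_face (hP : P = convexHull ℝ (A : Set (Fin n → ℝ))) (hne : P.Nonempty)
    (hfin : {F : Set (Fin n → ℝ) | IsFaceOf P F}.Finite) (hF : IsFaceOf P F)
    (φ : (Fin n → ℝ) → ℂ) {q : ℕ} (hq : 0 < q) :
    latSum φ F q = ∑ E ∈ hfin.toFinset.filter (· ⊆ F), latSum φ (relintSet E) q := by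
  have hq' : (q : ℝ) ≠ 0 := by exact_mod_cast hq.ne'
  have hunion : {m : Fin n → ℤ | intVec m ∈ (q : ℝ) • F} =
      ⋃ E ∈ (↑(hfin.toFinset.filter (· ⊆ F)) : Set (Set (Fin n → ℝ))),
        {m : Fin n → ℤ | intVec m ∈ (q : ℝ) • relintSet E} := by
    ext m
    simp only [Set.mem_ofPred_eq, Set.mem_iUnion, Finset.mem_coe, Finset.mem_filter,
      Set.Finite.mem_toFinset, Set.mem_smul_set_iff_inv_smul_mem₀ hq', exists_prop]
    constructor
    · intro hm
      obtain ⟨E, hE, hmE⟩ := exists_face_mem_relint hP hfin (hF.subset hm)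
      exact ⟨E, ⟨hE, face_subset_of_mem_relint hne hF hE.subset hmE hm⟩, hmE⟩
    · rintro ⟨E, ⟨hE, hEF⟩, hmE⟩
      exact hEF hmE.1
  rw [latSum, hunion, finsum_mem_biUnion, finsum_mem_coe_finset]
  · rfl
  · intro E hE E' hE' hne'
    refine Set.disjoint_left.mpr fun m hm hm' => hne' ?_
    simp only [Finset.coe_filter, Set.Finite.mem_toFinset, Set.mem_ofPred_eq] at hE hE'
    rw [Set.mem_ofPred_eq, Set.mem_smul_set_iff_inv_smul_mem₀ hq'] at hm hm'
    exact face_eq_of_mem_relint hne hE'.1 hE.1 hm hm'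
  · exact Finset.finite_toSet _
  · intro E hE
    simp only [Finset.coe_filter, Set.Finite.mem_toFinset, Set.mem_ofPred_eq] at hE
    exact lattice_dilate_finite hP (fun x hx => hE.1.subset hx.1) q

lemma poly_eq_of_eval_pos {D D' : ℂ[X]} (h : ∀ q : ℕ, 0 < q → D.eval (q : ℂ) = D'.eval (q : ℂ)) :
    D = D' := by
  refine Polynomial.eq_of_infinite_eval_eq D D' ?_
  refine Set.Infinite.mono (s := (fun q : ℕ => (q : ℂ)) '' Set.Ioi 0) ?_
    ((Set.Ioi_infinite 0).image Nat.cast_injective.injOn)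
  rintro _ ⟨q, hq, rfl⟩
  exact h q hq

lemma face_reciprocity (hP : P = convexHull ℝ (A : Set (Fin n → ℝ))) (hne : P.Nonempty)
    (hAint : ∀ a ∈ A, ∃ m : Fin n → ℤ, intVec m = a) (hF : IsFaceOf P F)
    (p : MvPolynomial (Fin n) ℂ) :
    ∃ D : ℂ[X], ∀ q : ℕ, 0 < q → D.eval (q : ℂ) = latSum (evalReal p) F q ∧
      D.eval (-(q : ℂ)) = (-1) ^ faceDim F * latSum (evalReal (negPoly p)) (relintSet F) q := by
  have hFe := face_eq_convexHull hne hP hF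
  have hne' : (A.filter (· ∈ F)).Nonempty := by
    have := (hF.exists_functional hne).1
    rw [hFe, convexHull_nonempty_iff] at this
    exact_mod_cast this
  obtain ⟨D, hD⟩ := polytope_reciprocity hne'
    (fun a ha => hAint a (Finset.mem_of_mem_filter a ha)) p (evalReal p) (fun _ => rfl) hFe
  refine ⟨D, fun q hq => ⟨(hD q hq).1, ?_⟩⟩
  rw [(hD q hq).2, latSum]
  simp only [evalReal_negPoly]

/-- The functional equation of the weighted Ehrhart polynomials of the faces. -/
lemma ehrhart_functional (hP : P = convexHull ℝ (A : Set (Fin n → ℝ))) (hne : P.Nonempty)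
    (hAint : ∀ a ∈ A, ∃ m : Fin n → ℤ, intVec m = a)
    (hfin : {F : Set (Fin n → ℝ) | IsFaceOf P F}.Finite)
    (p : MvPolynomial (Fin n) ℂ) (D D' : Set (Fin n → ℝ) → ℂ[X])
    (hD : ∀ F, IsFaceOf P F → ∀ q : ℕ, 0 < q → (D F).eval (q : ℂ) = latSum (evalReal p) F q)
    (hD' : ∀ F, IsFaceOf P F → ∀ q : ℕ, 0 < q →
      (D' F).eval (q : ℂ) = latSum (evalReal (negPoly p)) F q)
    (hF : IsFaceOf P F) (z : ℂ) :
    (D F).eval z = ∑ E ∈ hfin.toFinset.filter (· ⊆ F), (-1) ^ faceDim E * (D' E).eval (-z) := by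
  have key : D F = ∑ E ∈ hfin.toFinset.filter (· ⊆ F), C ((-1) ^ faceDim E) * (D' E).comp (-X) := by
    refine poly_eq_of_eval_pos fun q hq => ?_
    rw [hD F hF q hq, latSum_face hP hne hfin hF _ hq, Polynomial.eval_finsetSum]
    refine Finset.sum_congr rfl fun E hE => ?_
    have hEf : IsFaceOf P E := by simpa using (Finset.mem_filter.mp hE).1
    obtain ⟨D'', hD''⟩ := face_reciprocity hP hne hAint hEf (negPoly p)
    have : D' E = D'' := poly_eq_of_eval_pos fun q hq => by rw [hD' E hEf q hq, (hD'' q hq).1]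
    have hnn : evalReal (negPoly (negPoly p)) = evalReal p := by
      funext x; rw [evalReal_negPoly, evalReal_negPoly, neg_neg]
    rw [this, eval_mul, eval_C, eval_comp, eval_neg, eval_X, (hD'' q hq).2, hnn, ← mul_assoc,
      ← mul_pow]
    simp
  rw [key, Polynomial.eval_finsetSum]
  simp [eval_comp]

end FaceSums

/-! ### The face poset is Eulerian -/

section Eulerian

variable {n : ℕ} {P E F : Set (Fin n → ℝ)} {A : Finset (Fin n → ℝ)}

lemma faceDim_lt (hne : P.Nonempty) (hE : IsFaceOf P E) (hF : IsFaceOf P F) (hEF : E ⊂ F) :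
    faceDim E < faceDim F := by
  have hle : affineSpan ℝ E ≤ affineSpan ℝ F := affineSpan_mono ℝ hEF.subset
  refine lt_of_le_of_ne (Submodule.finrank_mono (AffineSubspace.direction_le hle)) fun heq => ?_
  obtain ⟨⟨e, he⟩, u, hEu⟩ := hE.exists_functional hne
  have hdir := Submodule.eq_of_le_of_finrank_eq (AffineSubspace.direction_le hle) heq
  have hspan : affineSpan ℝ E = affineSpan ℝ F :=
    AffineSubspace.eq_of_direction_eq_of_nonempty_of_le hdir ⟨e, mem_affineSpan ℝ he⟩ hle
  refine hEF.not_subset fun x hx => ?_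
  -- the functional defining `E` is constant on the affine span of `E`
  have hxd : x - e ∈ (affineSpan ℝ E).direction := by
    have : x ∈ affineSpan ℝ E := hspan ▸ mem_affineSpan ℝ hx
    exact AffineSubspace.vsub_mem_direction this (mem_affineSpan ℝ he)
  have hker : (affineSpan ℝ E).direction ≤ LinearMap.ker u := by
    rw [direction_affineSpan, vectorSpan_def, Submodule.span_le]
    rintro _ ⟨a, ha, b, hb, rfl⟩
    have ha' := ha
    have hb' := hb
    rw [hEu] at ha' hb'
    have : u a = u b := le_antisymm (hb'.2 a ha'.1) (ha'.2 b hb'.1)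
    simp [this]
  have hux : u x = u e := by
    have := hker hxd
    rw [LinearMap.mem_ker, map_sub] at this
    linarith
  have he' := he
  rw [hEu] at he' ⊢
  exact ⟨hF.subset hx, fun p hp => by rw [hux]; exact he'.2 p hp⟩

lemma faceDim_top (hfull : affineSpan ℝ P = ⊤) : faceDim P = n := by
  rw [faceDim, hfull, AffineSubspace.direction_top, finrank_top]
  simp

lemma faceDim_le (F : Set (Fin n → ℝ)) : faceDim F ≤ n := by
  have := Submodule.finrank_le (affineSpan ℝ F).direction
  simpa [faceDim] using this

/-- The sum of the generators on a face, divided by their number, is a relative interior point. -/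
lemma exists_lattice_relint (hP : P = convexHull ℝ (A : Set (Fin n → ℝ))) (hne : P.Nonempty)
    (hAint : ∀ a ∈ A, ∃ m : Fin n → ℤ, intVec m = a) (hF : IsFaceOf P F) :
    ∃ q : ℕ, 0 < q ∧ ∃ m : Fin n → ℤ, (q : ℝ)⁻¹ • intVec m ∈ relintSet F := by
  have hFe := face_eq_convexHull hne hP hF
  set B := A.filter (· ∈ F) with hB
  have hne' : B.Nonempty := by
    have := (hF.exists_functional hne).1
    rw [hFe, convexHull_nonempty_iff] at this
    exact_mod_cast this
  choose! f hf using hAint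
  have hsum : intVec (∑ b ∈ B, f b) = ∑ b ∈ B, b := by
    rw [← Finset.sum_congr rfl fun b hb => hf b (Finset.mem_of_mem_filter b hb)]
    funext i
    simp only [intVec, Finset.sum_apply, Int.cast_sum]
    rfl
  have hq : (0 : ℝ) < B.card := by exact_mod_cast hne'.card_pos
  refine ⟨B.card, hne'.card_pos, ∑ b ∈ B, f b, ?_⟩
  rw [hsum]
  obtain ⟨N, hN⟩ : ∃ N : ℝ, N = B.card := ⟨_, rfl⟩
  rw [← hN] at hq ⊢
  constructor
  · rw [hFe, Finset.mem_convexHull']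
    refine ⟨fun _ => N⁻¹, fun _ _ => by positivity, ?_, ?_⟩
    · rw [Finset.sum_const, nsmul_eq_mul, ← hN, mul_inv_cancel₀ hq.ne']
    · rw [Finset.smul_sum]
  · intro y hy
    refine ⟨N⁻¹, by positivity, ?_⟩
    rw [hFe, Finset.mem_convexHull'] at hy ⊢
    obtain ⟨c, hc, hc1, hcy⟩ := hy
    refine ⟨fun b => (1 + N⁻¹) * N⁻¹ - N⁻¹ * c b, fun b hb => ?_, ?_, ?_⟩
    · have h1 : c b ≤ 1 := hc1 ▸ Finset.single_le_sum hc hb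
      have h2 : 0 < N⁻¹ := by positivity
      nlinarith
    · rw [Finset.sum_sub_distrib, Finset.sum_const, nsmul_eq_mul, ← hN, ← Finset.mul_sum, hc1]
      field_simp
      ring
    · have h1 : ∑ b ∈ B, ((1 + N⁻¹) * N⁻¹ - N⁻¹ * c b) • b =
          ((1 + N⁻¹) * N⁻¹) • ∑ b ∈ B, b - N⁻¹ • ∑ b ∈ B, c b • b := by
        rw [Finset.smul_sum, Finset.smul_sum, ← Finset.sum_sub_distrib]
        exact Finset.sum_congr rfl fun b _ => by module
      rw [h1, hcy]
      module

/-- Polynomial interpolation of the indicator function of a lattice point on a finite set. -/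
lemma exists_interpolation (T : Finset (Fin n → ℤ)) (m₀ : Fin n → ℤ) :
    ∃ p : MvPolynomial (Fin n) ℂ, ∀ m ∈ T, evalReal p (intVec m) = if m = m₀ then 1 else 0 := by
  rcases isEmpty_or_nonempty (Fin n)
  · exact ⟨1, fun m _ => by simp [evalReal, Subsingleton.elim m m₀]⟩
  have hex : ∀ m : Fin n → ℤ, m ≠ m₀ → ∃ i, m i ≠ m₀ i := fun m hm => by
    by_contra h
    push Not at h
    exact hm (funext h)
  choose! c hc using hex
  refine ⟨∏ m ∈ T.erase m₀, MvPolynomial.C (((m₀ (c m) : ℂ) - m (c m))⁻¹) *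
    (MvPolynomial.X (c m) - MvPolynomial.C (m (c m) : ℂ)), fun m hm => ?_⟩
  simp only [evalReal, intVec, map_prod, map_mul, MvPolynomial.eval_C, map_sub,
    MvPolynomial.eval_X, Complex.ofReal_intCast]
  split_ifs with h
  · subst h
    refine Finset.prod_eq_one fun m' hm' => inv_mul_cancel₀ ?_
    rw [sub_ne_zero]
    exact_mod_cast (hc m' (Finset.ne_of_mem_erase hm')).symm
  · exact Finset.prod_eq_zero (Finset.mem_erase.mpr ⟨h, hm⟩) (by simp)

/-- Applying the functional equation twice expresses the sum over a face through the sums over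
its faces; interpolation turns this into an identity between indicator functions. -/
lemma indicator_identity (hP : P = convexHull ℝ (A : Set (Fin n → ℝ))) (hne : P.Nonempty)
    (hAint : ∀ a ∈ A, ∃ m : Fin n → ℤ, intVec m = a)
    (hfin : {F : Set (Fin n → ℝ) | IsFaceOf P F}.Finite) (hF : IsFaceOf P F) (hE : IsFaceOf P E)
    (hEF : E ⊆ F) :
    ∑ H ∈ hfin.toFinset.filter (fun H => E ⊆ H ∧ H ⊆ F), ((-1 : ℂ) ^ faceDim H *
      ∑ K ∈ hfin.toFinset.filter (fun K => H ⊆ K ∧ K ⊆ F), (-1 : ℂ) ^ faceDim K) = 1 := by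
  obtain ⟨q, hq, m₀, hm₀⟩ := exists_lattice_relint hP hne hAint hE
  have hq' : (q : ℝ) ≠ 0 := by exact_mod_cast hq.ne'
  have hTfin := lattice_dilate_finite hP (subset_refl P) q
  obtain ⟨p, hp⟩ := exists_interpolation hTfin.toFinset m₀
  have hmem : ∀ H, IsFaceOf P H → (intVec m₀ ∈ (q : ℝ) • H ↔ E ⊆ H) := fun H hH => by
    rw [Set.mem_smul_set_iff_inv_smul_mem₀ hq']
    exact ⟨fun h => face_subset_of_mem_relint hne hH hE.subset hm₀ h, fun h => h hm₀.1⟩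
  have hsum : ∀ H, IsFaceOf P H → latSum (evalReal p) H q = if E ⊆ H then 1 else 0 := by
    intro H hH
    have hfinH := lattice_dilate_finite hP hH.subset q
    rw [latSum, finsum_mem_eq_finite_toFinset_sum _ hfinH]
    rw [Finset.sum_congr rfl fun m hm => hp m (by
      rw [Set.Finite.mem_toFinset] at hm ⊢
      exact Set.smul_set_mono hH.subset hm), Finset.sum_ite_eq']
    simp only [Set.Finite.mem_toFinset, Set.mem_ofPred_eq, hmem H hH]
  have hface : ∀ H (r : MvPolynomial (Fin n) ℂ), ∃ D : ℂ[X], IsFaceOf P H → ∀ q : ℕ, 0 < q →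
      D.eval (q : ℂ) = latSum (evalReal r) H q := by
    intro H r
    by_cases hH : IsFaceOf P H
    · obtain ⟨D, hD⟩ := face_reciprocity hP hne hAint hH r
      exact ⟨D, fun _ q hq => (hD q hq).1⟩
    · exact ⟨0, fun h => absurd h hH⟩
  choose D hD using hface
  have hnn : evalReal (negPoly (negPoly p)) = evalReal p := by
    funext x; rw [evalReal_negPoly, evalReal_negPoly, neg_neg]
  have h1 := ehrhart_functional hP hne hAint hfin p (fun H => D H p) (fun H => D H (negPoly p))
    (fun H hH => hD H p hH) (fun H hH => hD H _ hH) hF (q : ℂ)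
  have h2 : ∀ K, IsFaceOf P K → (D K (negPoly p)).eval (-(q : ℂ)) =
      ∑ H ∈ hfin.toFinset.filter (· ⊆ K), (-1) ^ faceDim H * if E ⊆ H then 1 else 0 := by
    intro K hK
    rw [ehrhart_functional hP hne hAint hfin (negPoly p) (fun H => D H (negPoly p))
      (fun H => D H p) (fun H hH => hD H _ hH)
      (fun H hH q hq => by rw [hnn]; exact hD H p hH q hq) hK, neg_neg]
    refine Finset.sum_congr rfl fun H hH => ?_
    have hHf : IsFaceOf P H := by simpa using (Finset.mem_filter.mp hH).1
    rw [hD H p hHf q hq, hsum H hHf]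
  rw [hD F p hF q hq, hsum F hF, if_pos hEF] at h1
  refine Eq.trans ?_ h1.symm
  have h3 : ∀ K ∈ hfin.toFinset.filter (· ⊆ F),
      (-1) ^ faceDim K * (D K (negPoly p)).eval (-(q : ℂ)) =
      ∑ H ∈ hfin.toFinset.filter (· ⊆ K),
        (-1) ^ faceDim K * ((-1) ^ faceDim H * if E ⊆ H then 1 else 0) := by
    intro K hK
    rw [h2 K (by simpa using (Finset.mem_filter.mp hK).1), Finset.mul_sum]
  rw [Finset.sum_congr rfl h3]
  rw [Finset.sum_comm' (t' := hfin.toFinset.filter (· ⊆ F))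
    (s' := fun H => hfin.toFinset.filter (fun K => H ⊆ K ∧ K ⊆ F)) (by
      intro K H
      simp only [Finset.mem_filter]
      constructor
      · rintro ⟨⟨hK, hKF⟩, hH, hHK⟩
        exact ⟨⟨hK, hHK, hKF⟩, hH, hHK.trans hKF⟩
      · rintro ⟨⟨hK, hHK, hKF⟩, hH, hHF⟩
        exact ⟨⟨hK, hKF⟩, hH, hHK⟩)]
  symm
  have h4 : hfin.toFinset.filter (fun H => E ⊆ H ∧ H ⊆ F) =
      (hfin.toFinset.filter (· ⊆ F)).filter (E ⊆ ·) := by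
    rw [Finset.filter_filter]
    exact Finset.filter_congr fun H _ => and_comm
  rw [h4, Finset.sum_filter (E ⊆ ·)]
  refine Finset.sum_congr rfl fun H _ => ?_
  split_ifs with h
  · rw [Finset.mul_sum]
    exact Finset.sum_congr rfl fun K _ => by ring
  · simp

/-- The face poset of a polytope is **Eulerian**: proper intervals have Euler characteristic
zero. -/
lemma eulerian (hP : P = convexHull ℝ (A : Set (Fin n → ℝ))) (hne : P.Nonempty)
    (hAint : ∀ a ∈ A, ∃ m : Fin n → ℤ, intVec m = a)
    (hfin : {F : Set (Fin n → ℝ) | IsFaceOf P F}.Finite) (hF : IsFaceOf P F) :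
    ∀ E, IsFaceOf P E → E ⊂ F →
    ∑ K ∈ hfin.toFinset.filter (fun K => E ⊆ K ∧ K ⊆ F), (-1 : ℤ) ^ faceDim K = 0 := by
  -- downward induction: only the two ends of `[E, F]` contribute to the indicator identity
  have main : ∀ k : ℕ, ∀ E, IsFaceOf P E → E ⊂ F → faceDim F - faceDim E = k →
      ∑ K ∈ hfin.toFinset.filter (fun K => E ⊆ K ∧ K ⊆ F), (-1 : ℂ) ^ faceDim K = 0 := by
    intro k
    induction k using Nat.strong_induction_on with
    | _ k ih =>
      intro E hE hEF hk
      have hid := indicator_identity hP hne hAint hfin hF hE hEF.subset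
      have hFF := indicator_identity hP hne hAint hfin hF hF subset_rfl
      have hsingle : hfin.toFinset.filter (fun H => F ⊆ H ∧ H ⊆ F) = {F} := by
        ext H
        simp only [Finset.mem_filter, Set.Finite.mem_toFinset, Set.mem_ofPred_eq,
          Finset.mem_singleton]
        exact ⟨fun h => h.2.2.antisymm h.2.1, fun h => by subst h; exact ⟨hF, subset_rfl, subset_rfl⟩⟩
      have hsub : ({E, F} : Finset (Set (Fin n → ℝ))) ⊆
          hfin.toFinset.filter (fun H => E ⊆ H ∧ H ⊆ F) := by
        intro H hH
        simp only [Finset.mem_insert, Finset.mem_singleton] at hH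
        simp only [Finset.mem_filter, Set.Finite.mem_toFinset, Set.mem_ofPred_eq]
        rcases hH with rfl | rfl
        · exact ⟨hE, subset_rfl, hEF.subset⟩
        · exact ⟨hF, hEF.subset, subset_rfl⟩
      rw [← Finset.sum_subset hsub, Finset.sum_pair hEF.ne] at hid
      · rw [hsingle, Finset.sum_singleton, hsingle] at hFF
        rw [hsingle, hFF] at hid
        have h0 : (-1 : ℂ) ^ faceDim E * ∑ K ∈ hfin.toFinset.filter
            (fun K => E ⊆ K ∧ K ⊆ F), (-1 : ℂ) ^ faceDim K = 0 := by
          linear_combination hid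
        exact (mul_eq_zero.mp h0).resolve_left (pow_ne_zero _ (by norm_num))
      · intro H hH hHn
        simp only [Finset.mem_filter, Set.Finite.mem_toFinset, Set.mem_ofPred_eq] at hH
        simp only [Finset.mem_insert, Finset.mem_singleton, not_or] at hHn
        have hEH : E ⊂ H := hH.2.1.ssubset_of_ne (Ne.symm hHn.1)
        have hHF : H ⊂ F := hH.2.2.ssubset_of_ne hHn.2
        have d1 := faceDim_lt hne hE hH.1 hEH
        have d2 := faceDim_lt hne hH.1 hF hHF
        rw [ih (faceDim F - faceDim H) (by omega) H hH.1 hHF rfl, mul_zero]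
  intro E hE hEF
  have := main _ E hE hEF rfl
  exact_mod_cast this

end Eulerian

/-! ### Duality of the `g`-polynomials -/

section KazhdanLusztigStanley

/-- The truncation of `(1 - x) f` defining a `g`-polynomial from an `f`-polynomial. -/
def gTrunc (f : ℤ[X]) (N : ℕ) : ℤ[X] :=
  C (f.coeff 0) + ∑ l ∈ Finset.Icc 1 (N / 2), C (f.coeff l - f.coeff (l - 1)) * X ^ l

lemma coeff_gTrunc (f : ℤ[X]) (N k : ℕ) :
    (gTrunc f N).coeff k = if k ≤ N / 2 then ((1 - X) * f).coeff k else 0 := by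
  have h : (gTrunc f N).coeff k = (if k = 0 then f.coeff 0 else 0) +
      if k ∈ Finset.Icc 1 (N / 2) then f.coeff k - f.coeff (k - 1) else 0 := by
    rw [gTrunc, coeff_add, coeff_C, finsetSum_coeff]
    congr 1
    simp only [coeff_C_mul_X_pow]
    rw [Finset.sum_ite_eq]
  rw [h, sub_mul, one_mul]
  rcases k with _ | k
  · simp
  · simp [coeff_X_mul]

lemma natDegree_gTrunc_le (f : ℤ[X]) (N : ℕ) : (gTrunc f N).natDegree ≤ N / 2 := by
  rw [natDegree_le_iff_coeff_eq_zero]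
  intro k hk
  rw [coeff_gTrunc, if_neg (by omega)]

lemma natDegree_X_sub_one_pow_le (k : ℕ) : ((X - 1 : ℤ[X]) ^ k).natDegree ≤ k := by
  have := natDegree_pow_le_of_le k (natDegree_X_sub_C_le (1 : ℤ))
  simpa using this

lemma reflect_one_sub_X_pow (k : ℕ) :
    reflect k ((X - 1 : ℤ[X]) ^ k) = (1 - X) ^ k := by
  induction k with
  | zero => simp
  | succ k ih =>
    rw [pow_succ, reflect_mul _ _ (natDegree_X_sub_one_pow_le k)
      (by simpa using natDegree_X_sub_one_pow_le 1), ih, pow_succ]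
    congr 1
    rw [reflect_sub]
    have h1 : reflect 1 (X : ℤ[X]) = 1 := by simp
    have h2 : reflect 1 (1 : ℤ[X]) = X := by simp
    rw [h1, h2]

/-- For palindromic `f`, the polynomial `(1 - x) f` is antisymmetric, hence the difference of its
truncation and the reflection of the latter. -/
lemma reflect_gTrunc {f : ℤ[X]} {N : ℕ} (hdeg : f.natDegree ≤ N) (hpal : reflect N f = f) :
    reflect (N + 1) (gTrunc f N) = gTrunc f N + (X - 1) * f := by
  have hanti : reflect (N + 1) ((1 - X) * f) = -((1 - X) * f) := by
    have h := reflect_one_sub_X_pow 1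
    have h2 : reflect 1 (1 - X : ℤ[X]) = -(1 - X) := by
      rw [pow_one, pow_one] at h
      rw [← neg_sub X 1, reflect_neg, h]
      ring
    rw [add_comm N 1, reflect_mul _ _ ?_ hdeg, hpal, h2]
    · ring
    · have := natDegree_X_sub_C_le (1 : ℤ)
      rw [← neg_sub X 1, natDegree_neg]
      simpa using this
  have hc : ∀ k ≤ N + 1, ((1 - X) * f).coeff (N + 1 - k) = -((1 - X) * f).coeff k := by
    intro k hk
    have := congrArg (fun r => r.coeff k) hanti
    simp only [coeff_reflect, revAt_le hk, coeff_neg] at this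
    exact this
  have hbig : ∀ k, N + 1 < k → ((1 - X) * f).coeff k = 0 := by
    intro k hk
    refine coeff_eq_zero_of_natDegree_lt (lt_of_le_of_lt (natDegree_mul_le) ?_)
    have h1 : (1 - X : ℤ[X]).natDegree ≤ 1 := by
      have := natDegree_X_sub_C_le (1 : ℤ)
      rw [← neg_sub X 1, natDegree_neg]
      simpa using this
    omega
  have : gTrunc f N + (X - 1) * f = gTrunc f N - (1 - X) * f := by ring
  rw [this]
  ext k
  rw [coeff_reflect, coeff_sub]
  by_cases hk : k ≤ N + 1
  · rw [revAt_le hk, coeff_gTrunc, coeff_gTrunc, hc k hk]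
    by_cases h1 : k ≤ N / 2
    · rw [if_neg (by omega), if_pos h1]; ring
    · rw [if_neg h1]
      by_cases h2 : N + 1 - k ≤ N / 2
      · rw [if_pos h2]; ring
      -- the middle coefficient of an antisymmetric polynomial vanishes
      · have h3 : N + 1 - k = k := by omega
        have h4 := hc k hk
        rw [h3] at h4
        rw [if_neg h2]
        omega
  · push Not at hk
    rw [revAt_eq_self_of_lt hk, coeff_gTrunc, if_neg (by omega), hbig k hk]
    simp

variable {n : ℕ} {P F : Set (Fin n → ℝ)} {A : Finset (Fin n → ℝ)}

/-- The **Kazhdan–Lusztig–Stanley duality** of the `g`-polynomials. -/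
lemma kls (hP : P = convexHull ℝ (A : Set (Fin n → ℝ))) (hne : P.Nonempty)
    (hAint : ∀ a ∈ A, ∃ m : Fin n → ℤ, intVec m = a)
    (hfull : affineSpan ℝ P = ⊤)
    (hfin : {F : Set (Fin n → ℝ) | IsFaceOf P F}.Finite)
    (ft gt : Set (Fin n → ℝ) → ℤ[X]) (hgtP : gt P = 1)
    (hft : ∀ F, IsFaceOf P F → F ≠ P →
      ft F = ∑ E ∈ hfin.toFinset.filter (fun E => F ⊂ E),
        gt E * (X - 1) ^ (faceDim E - faceDim F - 1))
    (hgt : ∀ F, IsFaceOf P F → F ≠ P → gt F = gTrunc (ft F) (n - faceDim F - 1)) :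
    (∀ F, IsFaceOf P F → (gt F).natDegree ≤ n - faceDim F) ∧
    ∀ F, IsFaceOf P F → reflect (n - faceDim F) (gt F) =
      ∑ E ∈ hfin.toFinset.filter (fun E => F ⊆ E), gt E * (X - 1) ^ (faceDim E - faceDim F) := by
  have hPf : IsFaceOf P P := Or.inl rfl
  have hPd : faceDim P = n := faceDim_top hfull
  have hdeg : ∀ F, IsFaceOf P F → (gt F).natDegree ≤ n - faceDim F := by
    intro F hF
    by_cases hFP : F = P
    · rw [hFP, hgtP]; simp
    · rw [hgt F hF hFP]
      exact (natDegree_gTrunc_le _ _).trans (by omega)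
  refine ⟨hdeg, ?_⟩
  have main : ∀ k : ℕ, ∀ F, IsFaceOf P F → n - faceDim F = k → reflect (n - faceDim F) (gt F) =
      ∑ E ∈ hfin.toFinset.filter (fun E => F ⊆ E),
        gt E * (X - 1) ^ (faceDim E - faceDim F) := by
    intro k
    induction k using Nat.strong_induction_on with
    | _ k ih =>
      intro F hF hk
      by_cases hFP : F = P
      · have hs : hfin.toFinset.filter (fun E => F ⊆ E) = {P} := by
          ext E
          simp only [Finset.mem_filter, Set.Finite.mem_toFinset, Set.mem_ofPred_eq,
            Finset.mem_singleton, hFP]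
          exact ⟨fun h => h.1.subset.antisymm h.2, fun h => by subst h; exact ⟨hPf, subset_rfl⟩⟩
        rw [hs, Finset.sum_singleton, hFP, hgtP, hPd]
        simp
      · have hFd : faceDim F < n := by
          exact (faceDim_lt hne hF hPf (hF.subset.ssubset_of_ne hFP)).trans_eq hPd
        have hsplit : hfin.toFinset.filter (fun E => F ⊆ E) =
            insert F (hfin.toFinset.filter (fun E => F ⊂ E)) := by
          ext E
          simp only [Finset.mem_filter, Set.Finite.mem_toFinset, Set.mem_ofPred_eq,
            Finset.mem_insert]
          constructor
          · rintro ⟨hE, hFE⟩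
            by_cases h : E = F
            · exact Or.inl h
            · exact Or.inr ⟨hE, hFE.ssubset_of_ne (Ne.symm h)⟩
          · rintro (rfl | ⟨hE, hFE⟩)
            · exact ⟨hF, subset_rfl⟩
            · exact ⟨hE, hFE.subset⟩
        have hd : ∀ E ∈ hfin.toFinset.filter (fun E => F ⊂ E),
            IsFaceOf P E ∧ F ⊂ E ∧ faceDim F < faceDim E ∧ faceDim E ≤ n := by
          intro E hE
          simp only [Finset.mem_filter, Set.Finite.mem_toFinset, Set.mem_ofPred_eq] at hE
          exact ⟨hE.1, hE.2, faceDim_lt hne hF hE.1 hE.2, faceDim_le E⟩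
        have hfdeg : (ft F).natDegree ≤ n - faceDim F - 1 := by
          rw [hft F hF hFP]
          refine natDegree_sum_le_of_forall_le _ _ fun E hE => ?_
          obtain ⟨hEf, -, h1, h2⟩ := hd E hE
          refine natDegree_mul_le.trans ?_
          have := hdeg E hEf
          have := natDegree_X_sub_one_pow_le (faceDim E - faceDim F - 1)
          omega
        have hpal : reflect (n - faceDim F - 1) (ft F) = ft F := by
          have hterm : ∀ E ∈ hfin.toFinset.filter (fun E => F ⊂ E),
              reflect (n - faceDim F - 1) (gt E * (X - 1) ^ (faceDim E - faceDim F - 1)) =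
              ∑ K ∈ hfin.toFinset.filter (fun K => E ⊆ K),
                gt K * (X - 1) ^ (faceDim K - faceDim F - 1) *
                  C ((-1) ^ (faceDim E - faceDim F - 1)) := by
            intro E hE
            obtain ⟨hEf, -, h1, h2⟩ := hd E hE
            have hN : n - faceDim F - 1 = (n - faceDim E) + (faceDim E - faceDim F - 1) := by omega
            rw [hN, reflect_mul _ _ (hdeg E hEf) (natDegree_X_sub_one_pow_le _),
              reflect_one_sub_X_pow, ih (n - faceDim E) (by omega) E hEf rfl, Finset.sum_mul]
            refine Finset.sum_congr rfl fun K hK => ?_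
            simp only [Finset.mem_filter, Set.Finite.mem_toFinset, Set.mem_ofPred_eq] at hK
            have h3 : faceDim E ≤ faceDim K := by
              rcases eq_or_ne E K with rfl | hEK
              · exact le_rfl
              · exact (faceDim_lt hne hEf hK.1 (hK.2.ssubset_of_ne hEK)).le
            have h4 : faceDim K - faceDim F - 1 =
                (faceDim K - faceDim E) + (faceDim E - faceDim F - 1) := by omega
            rw [h4, pow_add, ← neg_sub X 1, neg_pow (X - 1 : ℤ[X])]
            simp only [map_pow, map_neg, map_one]
            ring
          rw [hft F hF hFP]
          have hlin : reflect (n - faceDim F - 1) (∑ E ∈ hfin.toFinset.filter (fun E => F ⊂ E),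
              gt E * (X - 1) ^ (faceDim E - faceDim F - 1)) =
              ∑ E ∈ hfin.toFinset.filter (fun E => F ⊂ E),
                reflect (n - faceDim F - 1) (gt E * (X - 1) ^ (faceDim E - faceDim F - 1)) := by
            ext i
            simp only [coeff_reflect, finsetSum_coeff]
          rw [hlin, Finset.sum_congr rfl hterm]
          rw [Finset.sum_comm' (t' := hfin.toFinset.filter (fun K => F ⊂ K))
            (s' := fun K => hfin.toFinset.filter (fun E => F ⊂ E ∧ E ⊆ K)) (by
              intro E K
              simp only [Finset.mem_filter]
              constructor
              · rintro ⟨⟨hE, hFE⟩, hK, hEK⟩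
                exact ⟨⟨hE, hFE, hEK⟩, hK, hFE.trans_subset hEK⟩
              · rintro ⟨⟨hE, hFE, hEK⟩, hK, _⟩
                exact ⟨⟨hE, hFE⟩, hK, hEK⟩)]
          refine Finset.sum_congr rfl fun K hK => ?_
          obtain ⟨hKf, hFK, -, -⟩ := hd K hK
          rw [← Finset.mul_sum, ← map_sum]
          have hone : ∑ E ∈ hfin.toFinset.filter (fun E => F ⊂ E ∧ E ⊆ K),
              (-1 : ℤ) ^ (faceDim E - faceDim F - 1) = 1 := by
            have he := eulerian hP hne hAint hfin hKf F hF hFK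
            have hs : hfin.toFinset.filter (fun E => F ⊆ E ∧ E ⊆ K) =
                insert F (hfin.toFinset.filter (fun E => F ⊂ E ∧ E ⊆ K)) := by
              ext E
              simp only [Finset.mem_filter, Set.Finite.mem_toFinset, Set.mem_ofPred_eq,
                Finset.mem_insert]
              constructor
              · rintro ⟨hE, hFE, hEK⟩
                by_cases h : E = F
                · exact Or.inl h
                · exact Or.inr ⟨hE, hFE.ssubset_of_ne (Ne.symm h), hEK⟩
              · rintro (rfl | ⟨hE, hFE, hEK⟩)
                · exact ⟨hF, subset_rfl, hFK.subset⟩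
                · exact ⟨hE, hFE.subset, hEK⟩
            rw [hs, Finset.sum_insert (by simp)] at he
            have hsq : ((-1 : ℤ) ^ faceDim F) * (-1) ^ faceDim F = 1 := by
              rw [← mul_pow]; simp
            have hconv : ∑ E ∈ hfin.toFinset.filter (fun E => F ⊂ E ∧ E ⊆ K),
                (-1 : ℤ) ^ faceDim E = -(-1) ^ faceDim F *
                  ∑ E ∈ hfin.toFinset.filter (fun E => F ⊂ E ∧ E ⊆ K),
                  (-1 : ℤ) ^ (faceDim E - faceDim F - 1) := by
              rw [Finset.mul_sum]
              refine Finset.sum_congr rfl fun E hE => ?_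
              simp only [Finset.mem_filter, Set.Finite.mem_toFinset, Set.mem_ofPred_eq] at hE
              have := faceDim_lt hne hF hE.1 hE.2.1
              have h5 : faceDim E = faceDim F + (faceDim E - faceDim F - 1) + 1 := by omega
              conv_lhs => rw [h5, pow_succ, pow_add]
              ring
            rw [hconv] at he
            linear_combination (-(-1) ^ faceDim F) * he + (1 - ∑ E ∈ hfin.toFinset.filter
              (fun E => F ⊂ E ∧ E ⊆ K), (-1 : ℤ) ^ (faceDim E - faceDim F - 1)) * hsq
          rw [hone]
          simp
        have hN1 : n - faceDim F = (n - faceDim F - 1) + 1 := by omega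
        have hrefl := reflect_gTrunc hfdeg hpal
        rw [← hN1] at hrefl
        rw [hsplit, Finset.sum_insert (by simp), Nat.sub_self, pow_zero, mul_one,
          hgt F hF hFP, hrefl]
        congr 1
        conv_lhs => rw [hft F hF hFP]
        rw [Finset.mul_sum]
        refine Finset.sum_congr rfl fun E hE => ?_
        obtain ⟨-, -, h1, -⟩ := hd E hE
        have h6 : faceDim E - faceDim F = (faceDim E - faceDim F - 1) + 1 := by omega
        conv_rhs => rw [h6, pow_succ]
        ring
  exact fun F hF => main _ F hF rfl

end KazhdanLusztigStanley

/-! ### The functional equation of `G` -/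

section Assembly

/-- Evaluation of a reflected polynomial: `x ^ N * g (1 / x)`. -/
lemma aeval_reflect {g : ℤ[X]} {N : ℕ} (hg : g.natDegree ≤ N) {x : ℂ} (hx : x ≠ 0) :
    aeval x (reflect N g) = x ^ N * aeval x⁻¹ g := by
  let : Invertible x⁻¹ := invertibleOfNonzero (inv_ne_zero hx)
  have h := eval₂_reflect_mul_pow (algebraMap ℤ ℂ) x⁻¹ N g hg
  rw [invOf_eq_inv, inv_inv] at h
  rw [aeval_def, aeval_def, ← h, mul_comm, mul_assoc, ← mul_pow, inv_mul_cancel₀ hx, one_pow,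
    mul_one]

end Assembly

/-- For an arbitrary full-dimensional lattice polytope `P ⊂ ℝ^n`
(not necessarily simple) and a homogeneous polynomial `φ` of degree `d`, the
generating function
`G_φ(q,y) = (y+1)^d ∑_F (y+1)^{dim F} (-y)^{codim F} D_{φ,F}(q) · g̃_F(-1/y)`
satisfies `G_φ(q,y) = (-y)^{n+d} G_φ(-q, 1/y)`.  Here `g̃_F` is the `g`-polynomial of
the face of the polar polytope dual to `F`, characterized by: `f̃_P = g̃_P = 1`, and for
every proper face `F`, `f̃_F(x) = ∑_{F ⊊ E ⊆ P} g̃_E(x)(x-1)^{dim E - dim F - 1}` and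
`g̃_F` is the truncation `a_0 + ∑_{l=1}^{⌊N/2⌋}(a_l - a_{l-1})x^l`, `N = n - dim F - 1`. -/
theorem stmt1 (n d : ℕ) (P : Set (Fin n → ℝ))
    (S : Finset (Fin n → ℤ)) (hP : P = convexHull ℝ (intVec '' (S : Set (Fin n → ℤ))))
    (hfull : affineSpan ℝ P = ⊤)
    (φ : (Fin n → ℝ) → ℂ) (p : MvPolynomial (Fin n) ℂ) (hp : p.IsHomogeneous d)
    (hφ : ∀ x, φ x = MvPolynomial.eval (fun i => (x i : ℂ)) p)
    (hfin : {F : Set (Fin n → ℝ) | IsFaceOf P F}.Finite)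
    (ft gt : Set (Fin n → ℝ) → Polynomial ℤ)
    (hftP : ft P = 1) (hgtP : gt P = 1)
    (hft : ∀ F, IsFaceOf P F → F ≠ P →
      ft F = ∑ E ∈ hfin.toFinset.filter (fun E => F ⊂ E),
        gt E * (Polynomial.X - 1) ^ (faceDim E - faceDim F - 1))
    (hgt : ∀ F, IsFaceOf P F → F ≠ P →
      gt F = Polynomial.C ((ft F).coeff 0) +
        ∑ l ∈ Finset.Icc 1 ((n - faceDim F - 1) / 2),
          Polynomial.C ((ft F).coeff l - (ft F).coeff (l - 1)) * Polynomial.X ^ l)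
    (D : Set (Fin n → ℝ) → Polynomial ℂ)
    (hD : ∀ F, IsFaceOf P F → ∀ q : ℕ, 0 < q →
      (D F).eval (q : ℂ) = ∑ᶠ m ∈ {m : Fin n → ℤ | intVec m ∈ (q : ℝ) • F}, φ (intVec m))
    (G : ℝ → ℝ → ℂ)
    (hG : ∀ q y : ℝ, y ≠ 0 → G q y = ((y : ℂ) + 1) ^ d *
      ∑ F ∈ hfin.toFinset,
        ((y : ℂ) + 1) ^ faceDim F * (-(y : ℂ)) ^ (n - faceDim F) * (D F).eval (q : ℂ) *
          Polynomial.aeval (-(1 / (y : ℂ))) (gt F)) :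
    ∀ q y : ℝ, y ≠ 0 → G q y = (-(y : ℂ)) ^ (n + d) * G (-q) (1 / y) := by
  intro q y hy
  have hPn : P.Nonempty := by
    by_contra h
    rw [Set.not_nonempty_iff_eq_empty] at h
    rw [h, AffineSubspace.span_empty] at hfull
    exact AffineSubspace.bot_ne_top ℝ _ _ hfull
  obtain ⟨A, hA⟩ : ∃ A : Finset (Fin n → ℝ), A = S.image intVec := ⟨_, rfl⟩
  have hPA : P = convexHull ℝ (A : Set (Fin n → ℝ)) := by rw [hP, hA, Finset.coe_image]
  have hAint : ∀ a ∈ A, ∃ m : Fin n → ℤ, intVec m = a := fun a ha => by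
    rw [hA] at ha
    obtain ⟨m, -, hm⟩ := Finset.mem_image.mp ha
    exact ⟨m, hm⟩
  obtain ⟨hdeg, hkls⟩ := kls hPA hPn hAint hfull hfin ft gt hgtP hft hgt
  have hφ' : φ = evalReal p := funext hφ
  have hDl : ∀ F, IsFaceOf P F → ∀ q : ℕ, 0 < q →
      (D F).eval (q : ℂ) = latSum (evalReal p) F q := fun F hF q hq => by
    rw [hD F hF q hq, hφ', latSum]
  -- for homogeneous `φ`, reversing the sign of the argument multiplies all sums by `(-1) ^ d`
  have hDneg : ∀ F, IsFaceOf P F → ∀ q : ℕ, 0 < q →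
      (C ((-1) ^ d) * D F).eval (q : ℂ) = latSum (evalReal (negPoly p)) F q :=
    fun F hF q hq => by
      have hf := lattice_dilate_finite hPA hF.subset q
      rw [eval_mul, eval_C, hDl F hF q hq, latSum, latSum,
        finsum_mem_eq_finite_toFinset_sum _ hf, finsum_mem_eq_finite_toFinset_sum _ hf,
        Finset.mul_sum]
      refine Finset.sum_congr rfl fun m _ => ?_
      rw [evalReal_negPoly, evalReal_neg_of_isHomogeneous hp]
  have hrec : ∀ F, IsFaceOf P F → (D F).eval (-(q : ℂ)) =
      ∑ E ∈ hfin.toFinset.filter (· ⊆ F),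
        (-1) ^ faceDim E * ((-1) ^ d * (D E).eval (q : ℂ)) := fun F hF => by
    rw [ehrhart_functional hPA hPn hAint hfin p D (fun F => C ((-1) ^ d) * D F) hDl hDneg hF,
      neg_neg]
    simp only [eval_mul, eval_C]
  set Y : ℂ := (y : ℂ) with hY
  have hY0 : Y ≠ 0 := by rw [hY]; exact_mod_cast hy
  have hdual : ∀ E, IsFaceOf P E → ∑ F ∈ hfin.toFinset.filter (fun F => E ⊆ F),
      aeval (-Y) (gt F) * (-Y - 1) ^ (faceDim F - faceDim E) =
        (-Y) ^ (n - faceDim E) * aeval (-(1 / Y)) (gt E) := fun E hE => by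
    have h := congrArg (aeval (-Y)) (hkls E hE)
    rw [aeval_reflect (hdeg E hE) (neg_ne_zero.mpr hY0), map_sum] at h
    have hinv : (-Y)⁻¹ = -(1 / Y) := by rw [inv_neg, one_div]
    rw [← hinv, h]
    refine Finset.sum_congr rfl fun F _ => ?_
    simp
  rw [hG q y hy, hG (-q) (1 / y) (one_div_ne_zero hy)]
  push_cast
  rw [← hY]
  have hterm : ∀ F ∈ hfin.toFinset, (-Y) ^ (n + d) * ((1 / Y + 1) ^ d *
      ((1 / Y + 1) ^ faceDim F * (-(1 / Y)) ^ (n - faceDim F) * (D F).eval (-(q : ℂ)) *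
        aeval (-(1 / (1 / Y))) (gt F))) =
      ∑ E ∈ hfin.toFinset.filter (· ⊆ F), (Y + 1) ^ d * ((-1) ^ faceDim E *
        (D E).eval (q : ℂ) * ((-Y - 1) ^ faceDim F * aeval (-Y) (gt F))) := by
    intro F hF
    have hFf : IsFaceOf P F := by simpa using hF
    have h1 : (-Y) ^ (n + d) = (-Y) ^ d * ((-Y) ^ faceDim F * (-Y) ^ (n - faceDim F)) := by
      rw [← pow_add, Nat.add_sub_cancel' (faceDim_le F), ← pow_add, add_comm]
    have h2 : -Y * (1 / Y + 1) = -Y - 1 := by field_simp; ring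
    have h3 : -Y * -(1 / Y) = 1 := by field_simp
    have h4 : (-Y) ^ (n + d) * ((1 / Y + 1) ^ d * ((1 / Y + 1) ^ faceDim F *
        (-(1 / Y)) ^ (n - faceDim F))) = (-Y - 1) ^ d * (-Y - 1) ^ faceDim F := by
      rw [h1, ← h2, mul_pow, mul_pow]
      have h5 : (-Y) ^ (n - faceDim F) * (-(1 / Y)) ^ (n - faceDim F) = 1 := by
        rw [← mul_pow, h3, one_pow]
      linear_combination ((-Y) ^ d * (-Y) ^ faceDim F * (1 / Y + 1) ^ d *
        (1 / Y + 1) ^ faceDim F) * h5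
    have h6 : (-Y - 1) ^ d * (-1) ^ d = (Y + 1) ^ d := by
      rw [← mul_pow]; congr 1; ring
    rw [one_div_one_div, hrec F hFf]
    calc _ = (-Y) ^ (n + d) * ((1 / Y + 1) ^ d * ((1 / Y + 1) ^ faceDim F *
        (-(1 / Y)) ^ (n - faceDim F))) * (∑ E ∈ hfin.toFinset.filter (· ⊆ F),
        (-1) ^ faceDim E * ((-1) ^ d * (D E).eval (q : ℂ))) * aeval (-Y) (gt F) := by ring
      _ = _ := by
        rw [h4, Finset.mul_sum, Finset.sum_mul]
        refine Finset.sum_congr rfl fun E _ => ?_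
        rw [← h6]
        ring
  rw [Finset.mul_sum, Finset.mul_sum, Finset.mul_sum, Finset.sum_congr rfl hterm]
  rw [Finset.sum_comm' (t' := hfin.toFinset)
    (s' := fun E => hfin.toFinset.filter (fun F => E ⊆ F)) (by
      intro F E
      simp only [Finset.mem_filter]
      tauto)]
  refine Finset.sum_congr rfl fun E hE => ?_
  have hEf : IsFaceOf P E := by simpa using hE
  have hpow : ∀ F ∈ hfin.toFinset.filter (fun F => E ⊆ F),
      (Y + 1) ^ d * ((-1) ^ faceDim E * (D E).eval (q : ℂ) *
        ((-Y - 1) ^ faceDim F * aeval (-Y) (gt F))) =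
      (Y + 1) ^ d * (Y + 1) ^ faceDim E * (D E).eval (q : ℂ) *
        (aeval (-Y) (gt F) * (-Y - 1) ^ (faceDim F - faceDim E)) := by
    intro F hF
    simp only [Finset.mem_filter, Set.Finite.mem_toFinset, Set.mem_ofPred_eq] at hF
    have hle : faceDim E ≤ faceDim F := by
      rcases eq_or_ne E F with rfl | hne
      · exact le_rfl
      · exact (faceDim_lt hPn hEf hF.1 (hF.2.ssubset_of_ne hne)).le
    have h7 : (-1) ^ faceDim E * (-Y - 1) ^ faceDim F =
        (Y + 1) ^ faceDim E * (-Y - 1) ^ (faceDim F - faceDim E) := by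
      nth_rewrite 1 [← Nat.add_sub_cancel' hle]
      rw [pow_add, ← mul_assoc, ← mul_pow]
      congr 2
      ring
    linear_combination ((Y + 1) ^ d * (D E).eval (q : ℂ) * aeval (-Y) (gt F)) * h7
  rw [Finset.sum_congr rfl hpow, ← Finset.mul_sum, hdual E hEf]
  ring
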